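/- For every complex number q with 0 < |q| < 1, one has ∑_{i,j,k,l ≥ 0} q^{4i²+4j²+4k²+5l²−4il−4jl+4kl−4i+4j−4k−2l} / ((q⁸;q⁸)_i (q⁸;q⁸)_j (q⁸;q⁸)_k (q⁸;q⁸)_l) = 4 J_16³ J_{32,80} / J_8⁴ + q^{−1} · J_8⁷ J_{12,40} J_{16,80} / (J_4⁴ J_16⁴ J_80). (This is the paper's identity F(q^{−1}, q, q^{−1}, q^{−1/2}; q²) = 4 J_4³ J_{8,20}/J_2⁴ + q^{−1/4} J_2⁷ J_{3,10} J_{4,20}/(J_1⁴ J_4⁴ J_20), with q replaced by q⁴ throughout to clear fractional exponents.) -/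

import Mathlib

open scoped BigOperators

/-- The infinite q-Pochhammer symbol `(a; q)_∞ = ∏_{k=0}^∞ (1 - a q^k)`. -/
noncomputable def qPochInf (a q : ℂ) : ℂ := ∏' n : ℕ, (1 - a * q ^ n)

/-- The finite q-Pochhammer symbol `(a; q)_n = ∏_{k=0}^{n-1} (1 - a q^k)`. -/
noncomputable def qPoch (a q : ℂ) (n : ℕ) : ℂ :=
  Finset.prod (Finset.range n) (fun k => 1 - a * q ^ k)

/-- `J_m = (q^m; q^m)_∞`. -/
noncomputable def J (q : ℂ) (m : ℕ) : ℂ := qPochInf (q ^ m) (q ^ m)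

/-- `J_{a,m} = (q^a; q^m)_∞ (q^{m-a}; q^m)_∞ (q^m; q^m)_∞`. -/
noncomputable def Jam (q : ℂ) (a m : ℕ) : ℂ :=
  qPochInf (q ^ a) (q ^ m) * qPochInf (q ^ (m - a)) (q ^ m) * qPochInf (q ^ m) (q ^ m)

/-!
For fixed `l`, Euler's expansion of `(-qz; q²)_∞` sums the series over `i`, `j` and `k`, leaving a
single series over `l` of products of theta type. Quasi-periodicity extracts the dependence on `l`
from these products, and its even and odd parts become numbers 46 and 97 (up to a simple rewriting)
of Slater's list of Rogers-Ramanujan type identities.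

Each of these is a sum `∑ δ_n β_n` with `β_n = ∑ α_r K(n, r)` for a Bailey kernel `K`: here
`α_(2r) = (-1)^r q^(r² + r)` in the even case, while the odd case has
`α_(3c) = -α_(3c+1) = q^(3c² + 2c)`. The closed form of `β_n` follows from a recurrence in `n` that
alternates between the kernels with `a = 1` and `a = q`, and `∑ δ_n K(n, r)` is a summable `₁φ₁`.
Exchanging the sums leaves theta series, evaluated by the triple product in the even case and by
the quintuple product in the odd case.
-/

open Filter Topology Finset

section Summability

variable {q : ℂ}

lemma norm_pow_lt_one (h1 : ‖q‖ < 1) {n : ℕ} (hn : n ≠ 0) : ‖q ^ n‖ < 1 := by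
  rw [norm_pow]
  exact pow_lt_one₀ (norm_nonneg q) h1 hn

lemma summable_zpow_sq_mul_zpow (h0 : q ≠ 0) (h1 : ‖q‖ < 1) {z : ℂ} (hz : z ≠ 0) :
    Summable fun n : ℤ => q ^ n ^ 2 * z ^ n := by
  have him : (Complex.log q / (Real.pi * Complex.I)).im = -Real.log ‖q‖ / Real.pi := by
    rw [show Complex.log q / (Real.pi * Complex.I) = -Complex.I * Complex.log q / (Real.pi : ℝ) by
      field_simp; simp, Complex.div_ofReal_im]
    simp [Complex.log_re]
  have hsum := (summable_jacobiTheta₂_term_iff (Complex.log z / (2 * Real.pi * Complex.I))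
    (Complex.log q / (Real.pi * Complex.I))).2 <| by
      rw [him]
      exact div_pos (neg_pos.2 (Real.log_neg (norm_pos_iff.2 h0) h1)) Real.pi_pos
  refine hsum.congr fun n => ?_
  have hexp : 2 * Real.pi * Complex.I * n * (Complex.log z / (2 * Real.pi * Complex.I)) +
      Real.pi * Complex.I * n ^ 2 * (Complex.log q / (Real.pi * Complex.I)) =
      ((n ^ 2 : ℤ) : ℂ) * Complex.log q + (n : ℂ) * Complex.log z := by
    push_cast; field_simp; ring
  rw [jacobiTheta₂_term, hexp, Complex.exp_add, Complex.exp_int_mul, Complex.exp_int_mul,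
    Complex.exp_log h0, Complex.exp_log hz]

lemma summable_zpow_quadratic (h0 : q ≠ 0) (h1 : ‖q‖ < 1) {A : ℕ} (hA : A ≠ 0) (B C : ℤ) :
    Summable fun n : ℤ => q ^ (A * n ^ 2 + B * n + C) := by
  refine ((summable_zpow_sq_mul_zpow (pow_ne_zero A h0) (norm_pow_lt_one h1 hA)
    (zpow_ne_zero B h0)).mul_right (q ^ C)).congr fun n => ?_
  rw [zpow_add₀ h0, zpow_add₀ h0, zpow_mul, zpow_mul, zpow_natCast]

lemma summable_zpow_quadratic_mul (h0 : q ≠ 0) (h1 : ‖q‖ < 1) {A : ℕ} (hA : A ≠ 0) (B C : ℤ)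
    {f : ℤ → ℂ} {M : ℝ} (hf : ∀ n, ‖f n‖ ≤ M) :
    Summable fun n : ℤ => q ^ (A * n ^ 2 + B * n + C) * f n :=
  .of_norm_bounded ((summable_zpow_quadratic h0 h1 hA B C).norm.mul_right M) fun n => by
    rw [norm_mul]
    exact mul_le_mul_of_nonneg_left (hf n) (norm_nonneg _)

end Summability

section QPochhammer

variable {q : ℂ}

lemma one_sub_pow_ne_zero (h1 : ‖q‖ < 1) {n : ℕ} (hn : n ≠ 0) : 1 - q ^ n ≠ 0 := fun h =>
  (norm_pow_lt_one h1 hn).ne (by rw [← sub_eq_zero.1 h, norm_one])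

@[simp]
lemma qPoch_zero (a q : ℂ) : qPoch a q 0 = 1 := by simp [qPoch]

lemma qPoch_succ (a q : ℂ) (n : ℕ) : qPoch a q (n + 1) = qPoch a q n * (1 - a * q ^ n) :=
  prod_range_succ _ n

lemma qPoch_add (a q : ℂ) (m n : ℕ) :
    qPoch a q (m + n) = qPoch a q m * qPoch (a * q ^ m) q n := by
  simp only [qPoch, prod_range_add, pow_add, mul_assoc]

lemma qPoch_succ' (a q : ℂ) (n : ℕ) : qPoch a q (n + 1) = (1 - a) * qPoch (a * q) q n := by
  rw [add_comm, qPoch_add, pow_one, qPoch_succ, qPoch_zero, pow_zero, mul_one, one_mul]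

@[simp]
lemma qPoch_zero_left (q : ℂ) (n : ℕ) : qPoch 0 q n = 1 := by simp [qPoch]

@[simp]
lemma qPochInf_zero_left (q : ℂ) : qPochInf 0 q = 1 := by simp [qPochInf]

lemma qPoch_ne_zero {a : ℂ} (ha : ∀ n, 1 - a * q ^ n ≠ 0) (n : ℕ) : qPoch a q n ≠ 0 :=
  prod_ne_zero_iff.2 fun k _ => ha k

lemma summable_norm_mul_pow (h1 : ‖q‖ < 1) (a : ℂ) : Summable fun n => ‖-(a * q ^ n)‖ := by
  simpa only [norm_neg, norm_mul, norm_pow] using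
    (summable_geometric_of_lt_one (norm_nonneg q) h1).mul_left ‖a‖

lemma tendsto_qPoch (h1 : ‖q‖ < 1) (a : ℂ) :
    Tendsto (qPoch a q) atTop (𝓝 (qPochInf a q)) := by
  have := (multipliable_one_add_of_summable (summable_norm_mul_pow h1 a)).hasProd.tendsto_prod_nat
  simp only [← sub_eq_add_neg] at this
  exact this

lemma qPochInf_ne_zero (h1 : ‖q‖ < 1) {a : ℂ} (ha : ∀ n, 1 - a * q ^ n ≠ 0) :
    qPochInf a q ≠ 0 := by
  simpa only [qPochInf, sub_eq_add_neg] using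
    tprod_one_add_ne_zero_of_summable (by simpa only [sub_eq_add_neg] using ha)
      (summable_norm_mul_pow h1 a)

lemma one_sub_mul_pow_self_ne_zero (h1 : ‖q‖ < 1) (n : ℕ) : 1 - q * q ^ n ≠ 0 := by
  rw [← pow_succ']
  exact one_sub_pow_ne_zero h1 n.succ_ne_zero

lemma J_ne_zero (h1 : ‖q‖ < 1) {m : ℕ} (hm : m ≠ 0) : J q m ≠ 0 :=
  have h1' := norm_pow_lt_one h1 hm
  qPochInf_ne_zero h1' (one_sub_mul_pow_self_ne_zero h1')

lemma qPochInf_eq_qPoch_mul (h1 : ‖q‖ < 1) (a : ℂ) (n : ℕ) :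
    qPochInf a q = qPoch a q n * qPochInf (a * q ^ n) q := by
  refine tendsto_nhds_unique ?_ ((tendsto_qPoch h1 (a * q ^ n)).const_mul (qPoch a q n))
  simpa only [← qPoch_add, add_comm n] using (tendsto_add_atTop_iff_nat n).2 (tendsto_qPoch h1 a)

lemma qPoch_mul (a q : ℂ) (m n : ℕ) :
    qPoch a q (m * n) = ∏ i ∈ range m, qPoch (a * q ^ i) (q ^ m) n := by
  induction n with
  | zero => simp
  | succ n ih =>
    simp only [Nat.mul_succ, qPoch_add, ih, qPoch_succ, prod_mul_distrib]
    simp only [qPoch, ← pow_mul]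
    congr 1
    exact prod_congr rfl fun i _ => by ring

lemma qPochInf_eq_prod_multisection (h1 : ‖q‖ < 1) (a : ℂ) {m : ℕ} (hm : m ≠ 0) :
    qPochInf a q = ∏ i ∈ range m, qPochInf (a * q ^ i) (q ^ m) := by
  refine tendsto_nhds_unique
    ((tendsto_qPoch h1 a).comp (tendsto_id.const_mul_atTop' (Nat.pos_of_ne_zero hm))) ?_
  simpa only [Function.comp_def, id, qPoch_mul] using
    tendsto_finsetProd (range m) fun i _ => tendsto_qPoch (norm_pow_lt_one h1 hm) (a * q ^ i)

lemma qPoch_mul_qPoch_neg (a q : ℂ) (n : ℕ) :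
    qPoch a q n * qPoch (-a) q n = qPoch (a ^ 2) (q ^ 2) n := by
  simp only [qPoch, ← prod_mul_distrib]
  exact prod_congr rfl fun k _ => by ring

lemma qPochInf_mul_qPochInf_neg (h1 : ‖q‖ < 1) (a : ℂ) :
    qPochInf a q * qPochInf (-a) q = qPochInf (a ^ 2) (q ^ 2) :=
  tendsto_nhds_unique (by
    simpa only [qPoch_mul_qPoch_neg] using (tendsto_qPoch h1 a).mul (tendsto_qPoch h1 (-a)))
    (tendsto_qPoch (norm_pow_lt_one h1 two_ne_zero) (a ^ 2))

end QPochhammer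

section OneOnePhi

variable {q c : ℂ}

/-- The numerator `(c/d; q)_n (-d)^n q^{n(n-1)/2}` of the `₁φ₁` series with parameters `c/d` and `c`
at its summable argument `d`, written as a product so that `d = 0` is allowed. -/
noncomputable def oneOnePhiNum (q c d : ℂ) (n : ℕ) : ℂ := ∏ k ∈ range n, q ^ k * (c * q ^ k - d)

/-- The `n`-th term of the `₁φ₁` series with parameters `c/d` and `c` at its summable argument
`d`; see `oneOnePhiNum`. -/
noncomputable def oneOnePhiTerm (q c d : ℂ) (n : ℕ) : ℂ :=
  oneOnePhiNum q c d n / (qPoch q q n * qPoch c q n)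

lemma oneOnePhiNum_succ (q c d : ℂ) (n : ℕ) :
    oneOnePhiNum q c d (n + 1) = oneOnePhiNum q c d n * (q ^ n * (c * q ^ n - d)) :=
  prod_range_succ _ n

lemma oneOnePhiNum_add (q c d : ℂ) (m n : ℕ) :
    oneOnePhiNum q c d (m + n) =
      oneOnePhiNum q c d m * oneOnePhiNum q (c * q ^ (2 * m)) (d * q ^ m) n := by
  simp only [oneOnePhiNum, prod_range_add]
  congr 1
  exact prod_congr rfl fun k _ => by ring

lemma oneOnePhiNum_mul_mul (q c d x : ℂ) (n : ℕ) :
    oneOnePhiNum q (c * x) (d * x) n = x ^ n * oneOnePhiNum q c d n := by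
  have hfactor (k : ℕ) : q ^ k * (c * x * q ^ k - d * x) = x * (q ^ k * (c * q ^ k - d)) := by ring
  simp only [oneOnePhiNum, hfactor, prod_mul_distrib, prod_const, card_range]

lemma qPoch_self_ne_zero (h1 : ‖q‖ < 1) (n : ℕ) : qPoch q q n ≠ 0 :=
  qPoch_ne_zero (one_sub_mul_pow_self_ne_zero h1) n

lemma exists_norm_qPoch_le (h1 : ‖q‖ < 1) (a : ℂ) : ∃ M, ∀ n, ‖qPoch a q n‖ ≤ M := by
  obtain ⟨M, hM⟩ := (tendsto_qPoch h1 a).norm.bddAbove_range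
  exact ⟨M, fun n => hM ⟨n, rfl⟩⟩

lemma exists_norm_inv_qPoch_le (h1 : ‖q‖ < 1) {a : ℂ} (ha : ∀ n, 1 - a * q ^ n ≠ 0) :
    ∃ M, ∀ n, ‖(qPoch a q n)⁻¹‖ ≤ M := by
  obtain ⟨M, hM⟩ := ((tendsto_qPoch h1 a).inv₀ (qPochInf_ne_zero h1 ha)).norm.bddAbove_range
  exact ⟨M, fun n => hM ⟨n, rfl⟩⟩

lemma oneOnePhiTerm_succ (q c d : ℂ) (n : ℕ) :
    oneOnePhiTerm q c d (n + 1) =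
      q ^ n * (c * q ^ n - d) / ((1 - q * q ^ n) * (1 - c * q ^ n)) * oneOnePhiTerm q c d n := by
  simp only [oneOnePhiTerm, oneOnePhiNum_succ, qPoch_succ, div_eq_mul_inv, mul_inv]
  ring

lemma summable_oneOnePhiTerm (h1 : ‖q‖ < 1) (c d : ℂ) : Summable (oneOnePhiTerm q c d) := by
  have hpow (a : ℂ) : Tendsto (fun n => a * q ^ n) atTop (𝓝 0) := by
    simpa using (tendsto_pow_atTop_nhds_zero_of_norm_lt_one h1).const_mul a
  have hratio : Tendsto (fun n => ‖q ^ n * (c * q ^ n - d) / ((1 - q * q ^ n) * (1 - c * q ^ n))‖)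
      atTop (𝓝 0) := by
    simpa using (((tendsto_pow_atTop_nhds_zero_of_norm_lt_one h1).mul ((hpow c).sub_const d)).div
      (((hpow q).const_sub 1).mul ((hpow c).const_sub 1)) (by simp)).norm
  refine summable_of_ratio_norm_eventually_le one_half_lt_one ?_
  filter_upwards [hratio.eventually_le_const one_half_pos] with n hn
  rw [oneOnePhiTerm_succ, norm_mul]
  exact mul_le_mul_of_nonneg_right hn (norm_nonneg _)

lemma oneOnePhiTerm_contiguous (h1 : ‖q‖ < 1) (hc : ∀ n, 1 - c * q ^ n ≠ 0) (d : ℂ) (n : ℕ) :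
    (1 - c) * oneOnePhiTerm q c d n - (1 - c) * (1 - q ^ n) * oneOnePhiTerm q c d n +
      (1 - c) * (1 - q ^ (n + 1)) * oneOnePhiTerm q c d (n + 1) =
      (1 - d) * oneOnePhiTerm q (c * q) (d * q) n := by
  have hcq : (1 - c) * qPoch (c * q) q n = qPoch c q n * (1 - c * q ^ n) := by
    rw [← qPoch_succ', qPoch_succ]
  have hc0 : 1 - c ≠ 0 := by simpa using hc 0
  have hcn := hc n
  have hqn : 1 - q ^ (n + 1) ≠ 0 := one_sub_pow_ne_zero h1 n.succ_ne_zero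
  have hpc := qPoch_ne_zero hc n
  have hpq := qPoch_self_ne_zero h1 n
  rw [oneOnePhiTerm_succ]
  simp only [oneOnePhiTerm, oneOnePhiNum_mul_mul, ← pow_succ',
    eq_div_of_mul_eq hc0 ((mul_comm _ _).trans hcq)]
  field_simp
  ring

lemma tsum_oneOnePhiTerm_mul_one_sub (h1 : ‖q‖ < 1) (hc : ∀ n, 1 - c * q ^ n ≠ 0) (d : ℂ) :
    (1 - c) * ∑' n, oneOnePhiTerm q c d n =
      (1 - d) * ∑' n, oneOnePhiTerm q (c * q) (d * q) n := by
  have hs := (summable_oneOnePhiTerm h1 c d).mul_left (1 - c)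
  have hqs : Summable fun n => q ^ n * oneOnePhiTerm q c d n :=
    .of_norm_bounded (summable_oneOnePhiTerm h1 c d).norm fun n => by
      rw [norm_mul, norm_pow]
      exact mul_le_of_le_one_left (norm_nonneg _) (pow_le_one₀ (norm_nonneg q) h1.le)
  have hg : Summable fun n => (1 - c) * (1 - q ^ n) * oneOnePhiTerm q c d n :=
    (hs.sub (hqs.mul_left (1 - c))).congr fun n => by ring
  rw [← tsum_mul_left, ← tsum_mul_left,
    ← tsum_congr fun n => oneOnePhiTerm_contiguous h1 hc d n,
    (hs.sub hg).tsum_add ((summable_nat_add_iff 1).2 hg), hs.tsum_sub hg, hg.tsum_eq_zero_add]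
  simp

lemma qPoch_mul_tsum_oneOnePhiTerm (h1 : ‖q‖ < 1) (hc : ∀ n, 1 - c * q ^ n ≠ 0) (d : ℂ) (N : ℕ) :
    qPoch c q N * ∑' n, oneOnePhiTerm q c d n =
      qPoch d q N * ∑' n, oneOnePhiTerm q (c * q ^ N) (d * q ^ N) n := by
  induction N with
  | zero => simp
  | succ N ih =>
    have hcN (n : ℕ) : 1 - c * q ^ N * q ^ n ≠ 0 := by
      rw [mul_assoc, ← pow_add]
      exact hc (N + n)
    have hstep := tsum_oneOnePhiTerm_mul_one_sub h1 hcN (d * q ^ N)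
    rw [qPoch_succ, qPoch_succ, pow_succ, ← mul_assoc, ← mul_assoc]
    linear_combination (1 - c * q ^ N) * ih + qPoch d q N * hstep

lemma oneOnePhiTerm_mul_pow (h1 : ‖q‖ < 1) (hc : ∀ n, 1 - c * q ^ n ≠ 0) (d : ℂ) (N n : ℕ) :
    oneOnePhiTerm q (c * q ^ N) (d * q ^ N) n =
      (q ^ n) ^ N *
        (oneOnePhiTerm q c d n * (qPoch c q n * qPoch c q N * (qPoch c q (N + n))⁻¹)) := by
  have hcn := qPoch_ne_zero hc n
  have hcN := qPoch_ne_zero hc N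
  have hcNn := qPoch_ne_zero hc (N + n)
  rw [qPoch_add, mul_ne_zero_iff] at hcNn
  rw [qPoch_add]
  simp only [oneOnePhiTerm, oneOnePhiNum_mul_mul]
  have hq := qPoch_self_ne_zero h1 n
  field_simp
  ring

lemma tendsto_tsum_oneOnePhiTerm_mul_pow (h1 : ‖q‖ < 1) (hc : ∀ n, 1 - c * q ^ n ≠ 0) (d : ℂ) :
    Tendsto (fun N => ∑' n, oneOnePhiTerm q (c * q ^ N) (d * q ^ N) n) atTop (𝓝 1) := by
  obtain ⟨M, hM⟩ := exists_norm_qPoch_le h1 c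
  obtain ⟨M', hM'⟩ := exists_norm_inv_qPoch_le h1 hc
  have hM0 : 0 ≤ M := (norm_nonneg _).trans (hM 0)
  have hlim : ∑' n : ℕ, (0 : ℂ) ^ n * (oneOnePhiTerm q c d n *
      (qPoch c q n * qPochInf c q * (qPochInf c q)⁻¹)) = 1 := by
    rw [tsum_eq_single 0 fun n hn => by rw [zero_pow hn, zero_mul],
      mul_assoc _ (qPochInf c q), mul_inv_cancel₀ (qPochInf_ne_zero h1 hc)]
    simp [oneOnePhiTerm, oneOnePhiNum]
  rw [← hlim]
  refine tendsto_tsum_of_dominated_convergence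
    (bound := fun n => ‖oneOnePhiTerm q c d n‖ * (M * M * M'))
    ((summable_oneOnePhiTerm h1 c d).norm.mul_right _) (fun n => ?_) (.of_forall fun N n => ?_)
  · simp only [oneOnePhiTerm_mul_pow h1 hc]
    refine .mul ?_ (.const_mul _ (((tendsto_qPoch h1 c).const_mul _).mul
      (((tendsto_add_atTop_iff_nat n).2 (tendsto_qPoch h1 c)).inv₀ (qPochInf_ne_zero h1 hc))))
    rcases eq_or_ne n 0 with rfl | hn
    · exact tendsto_const_nhds.congr fun N => by simp
    · rw [zero_pow hn]
      exact tendsto_pow_atTop_nhds_zero_of_norm_lt_one (norm_pow_lt_one h1 hn)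
  · rw [oneOnePhiTerm_mul_pow h1 hc, norm_mul, norm_mul _ (_ * _), norm_mul _ (_)⁻¹,
      norm_mul (qPoch _ _ _)]
    refine (mul_le_of_le_one_left (by positivity) ?_).trans ?_
    · rw [norm_pow, norm_pow]
      exact pow_le_one₀ (by positivity) (pow_le_one₀ (norm_nonneg q) h1.le)
    · gcongr <;> apply_rules

theorem hasSum_oneOnePhiTerm (h1 : ‖q‖ < 1) (hc : ∀ n, 1 - c * q ^ n ≠ 0) (d : ℂ) :
    HasSum (oneOnePhiTerm q c d) (qPochInf d q / qPochInf c q) := by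
  convert (summable_oneOnePhiTerm h1 c d).hasSum using 1
  have hlim := tendsto_nhds_unique
    (((tendsto_qPoch h1 c).mul_const (∑' n, oneOnePhiTerm q c d n)).congr
      (qPoch_mul_tsum_oneOnePhiTerm h1 hc d))
    ((tendsto_qPoch h1 d).mul (tendsto_tsum_oneOnePhiTerm_mul_pow h1 hc d))
  rw [div_eq_iff (qPochInf_ne_zero h1 hc), mul_comm, hlim, mul_one]

end OneOnePhi

section QFactInv

variable {q : ℂ}

/-- The reciprocal `1 / (q; q)_n`, extended by `0` to negative `n`, so that all finite
`q`-hypergeometric sums become sums over `ℤ`. -/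
noncomputable def qFactInv (q : ℂ) (n : ℤ) : ℂ := if 0 ≤ n then (qPoch q q n.toNat)⁻¹ else 0

@[simp]
lemma qFactInv_natCast (q : ℂ) (n : ℕ) : qFactInv q n = (qPoch q q n)⁻¹ := by simp [qFactInv]

lemma qFactInv_of_neg (q : ℂ) {n : ℤ} (hn : n < 0) : qFactInv q n = 0 := if_neg hn.not_ge

lemma qFactInv_sub_one (h1 : ‖q‖ < 1) (n : ℤ) :
    qFactInv q (n - 1) = (1 - q ^ n) * qFactInv q n := by
  rcases lt_trichotomy n 0 with hn | rfl | hn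
  · rw [qFactInv_of_neg q hn, qFactInv_of_neg q (by lia), mul_zero]
  · rw [qFactInv_of_neg q (by lia), zpow_zero, sub_self, zero_mul]
  · obtain ⟨k, rfl⟩ : ∃ k : ℕ, n = (k + 1 : ℕ) := ⟨(n - 1).toNat, by lia⟩
    have hk : 1 - q ^ (k + 1) ≠ 0 := one_sub_pow_ne_zero h1 k.succ_ne_zero
    rw [zpow_natCast, qFactInv_natCast, qPoch_succ, ← pow_succ', mul_inv, mul_comm _⁻¹,
      mul_inv_cancel_left₀ hk, ← qFactInv_natCast, Nat.cast_succ, add_sub_cancel_right]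

lemma exists_norm_qFactInv_le (h1 : ‖q‖ < 1) : ∃ M, ∀ n, ‖qFactInv q n‖ ≤ M := by
  obtain ⟨M, hM⟩ := exists_norm_inv_qPoch_le h1 (one_sub_mul_pow_self_ne_zero h1)
  refine ⟨M, fun n => ?_⟩
  unfold qFactInv
  split_ifs
  · exact hM _
  · rw [norm_zero]
    exact (norm_nonneg _).trans (hM 0)

lemma tendsto_qFactInv_add_natCast (h1 : ‖q‖ < 1) (m : ℤ) :
    Tendsto (fun N : ℕ => qFactInv q (m + N)) atTop (𝓝 (qPochInf q q)⁻¹) := by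
  have htoNat : Tendsto (fun N : ℕ => (m + N).toNat) atTop atTop :=
    tendsto_atTop.2 fun b => (eventually_ge_atTop (b + m.natAbs)).mono fun N hN => by lia
  refine (((tendsto_qPoch h1 q).inv₀
    (qPochInf_ne_zero h1 (one_sub_mul_pow_self_ne_zero h1))).comp htoNat).congr' ?_
  filter_upwards [eventually_ge_atTop m.natAbs] with N hN
  rw [Function.comp_apply, qFactInv, if_pos (by lia)]

lemma hasSum_natCast_iff {f : ℤ → ℂ} {s : ℂ} (hf : ∀ n < 0, f n = 0) :
    HasSum (fun n : ℕ => f n) s ↔ HasSum f s :=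
  Nat.cast_injective.hasSum_iff fun n hn => hf n <| by
    by_contra! h
    exact hn ⟨n.toNat, Int.toNat_of_nonneg h⟩

end QFactInv

section JacobiTripleProduct

variable {q z : ℂ}

theorem hasSum_euler (h1 : ‖q‖ < 1) (z : ℂ) :
    HasSum (fun n : ℕ => q ^ n ^ 2 * z ^ n * (qPoch (q ^ 2) (q ^ 2) n)⁻¹)
      (qPochInf (-(q * z)) (q ^ 2)) := by
  have hnum (n : ℕ) : oneOnePhiNum (q ^ 2) 0 (-(q * z)) n = q ^ n ^ 2 * z ^ n := by
    induction n with
    | zero => simp [oneOnePhiNum]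
    | succ n ih => rw [oneOnePhiNum_succ, ih]; ring
  convert hasSum_oneOnePhiTerm (c := 0) (norm_pow_lt_one h1 two_ne_zero) (by simp) (-(q * z))
    using 1
  · ext n
    rw [oneOnePhiTerm, hnum, qPoch_zero_left, mul_one, div_eq_mul_inv]
  · rw [qPochInf_zero_left, div_one]

lemma qPoch_neg_mul_div_pow (h0 : q ≠ 0) (hz : z ≠ 0) (N : ℕ) :
    qPoch (-(q * (z / q ^ (2 * N)))) (q ^ 2) N =
      z ^ N / q ^ N ^ 2 * qPoch (-(q / z)) (q ^ 2) N := by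
  induction N with
  | zero => simp
  | succ N ih =>
    have harg : -(q * (z / q ^ (2 * (N + 1)))) * q ^ 2 = -(q * (z / q ^ (2 * N))) := by
      field_simp
      ring
    rw [qPoch_succ', harg, ih, qPoch_succ]
    field_simp
    ring

lemma qPochInf_neg_mul_div_pow (h0 : q ≠ 0) (h1 : ‖q‖ < 1) (hz : z ≠ 0) (N : ℕ) :
    qPochInf (-(q * (z / q ^ (2 * N)))) (q ^ 2) =
      z ^ N / q ^ N ^ 2 * qPoch (-(q / z)) (q ^ 2) N * qPochInf (-(q * z)) (q ^ 2) := by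
  have harg : -(q * (z / q ^ (2 * N))) * (q ^ 2) ^ N = -(q * z) := by
    field_simp
    ring
  rw [qPochInf_eq_qPoch_mul (norm_pow_lt_one h1 two_ne_zero) _ N, qPoch_neg_mul_div_pow h0 hz, harg]

/-- The product `(-qz, -q/z; q²)_∞`, i.e. Jacobi's theta function in product form without its
constant factor `(q²; q²)_∞`. -/
noncomputable def thetaProd (q z : ℂ) : ℂ :=
  qPochInf (-(q * z)) (q ^ 2) * qPochInf (-(q / z)) (q ^ 2)

lemma thetaProd_div_pow (h0 : q ≠ 0) (h1 : ‖q‖ < 1) (hz : z ≠ 0) (N : ℕ) :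
    thetaProd q (z / q ^ (2 * N)) = z ^ N / q ^ N ^ 2 * thetaProd q z := by
  have harg : -(q / (z / q ^ (2 * N))) = -(q / z) * (q ^ 2) ^ N := by
    field_simp
    ring
  rw [thetaProd, thetaProd, qPochInf_neg_mul_div_pow h0 h1 hz, harg,
    qPochInf_eq_qPoch_mul (norm_pow_lt_one h1 two_ne_zero) (-(q / z)) N]
  ring

lemma hasSum_finite_jacobi (h0 : q ≠ 0) (h1 : ‖q‖ < 1) (hz : z ≠ 0) (N : ℕ) :
    HasSum (fun m : ℤ => q ^ m ^ 2 * z ^ m * qFactInv (q ^ 2) (m + N))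
      (qPoch (-(q / z)) (q ^ 2) N * qPochInf (-(q * z)) (q ^ 2)) := by
  have hint : HasSum
      (fun n : ℤ => q ^ n ^ 2 * (z / q ^ (2 * N)) ^ n * qFactInv (q ^ 2) n)
      (qPochInf (-(q * (z / q ^ (2 * N)))) (q ^ 2)) := by
    refine (hasSum_natCast_iff fun n hn => by rw [qFactInv_of_neg _ hn, mul_zero]).1 ?_
    simpa only [qFactInv_natCast, zpow_natCast, ← Nat.cast_pow] using hasSum_euler h1 _
  have hterm (m : ℤ) : q ^ m ^ 2 * z ^ m * qFactInv (q ^ 2) (m + N) =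
      q ^ N ^ 2 / z ^ N *
        (q ^ (m + N) ^ 2 * (z / q ^ (2 * N)) ^ (m + N) * qFactInv (q ^ 2) (m + N)) := by
    have hexp : (m + N) ^ 2 + -((2 * N : ℕ) * (m + N)) = m ^ 2 - (N ^ 2 : ℕ) := by
      push_cast; ring
    have hpow : q ^ (m + N) ^ 2 * (z / q ^ (2 * N)) ^ (m + N) =
        q ^ m ^ 2 / q ^ N ^ 2 * (z ^ m * z ^ N) := by
      rw [div_zpow, ← zpow_natCast q (2 * N), ← zpow_mul, div_eq_mul_inv, ← zpow_neg,
        mul_left_comm, ← zpow_add₀ h0, hexp, zpow_sub₀ h0, zpow_natCast, zpow_add₀ hz,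
        zpow_natCast, mul_comm]
    rw [hpow]
    field_simp
  have hvalue : qPoch (-(q / z)) (q ^ 2) N * qPochInf (-(q * z)) (q ^ 2) =
      q ^ N ^ 2 / z ^ N * qPochInf (-(q * (z / q ^ (2 * N)))) (q ^ 2) := by
    rw [qPochInf_neg_mul_div_pow h0 h1 hz]
    field_simp
  rw [hvalue, funext hterm]
  exact ((Equiv.addRight (N : ℤ)).hasSum_iff.2 hint).mul_left _

theorem hasSum_jacobiTripleProduct (h0 : q ≠ 0) (h1 : ‖q‖ < 1) (hz : z ≠ 0) :
    HasSum (fun n : ℤ => q ^ n ^ 2 * z ^ n) (thetaProd q z * qPochInf (q ^ 2) (q ^ 2)) := by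
  have hq2 := norm_pow_lt_one h1 two_ne_zero
  have hsum := summable_zpow_sq_mul_zpow h0 h1 hz
  obtain ⟨M, hM⟩ := exists_norm_qFactInv_le hq2
  have hlim : Tendsto (fun N : ℕ => ∑' m : ℤ, q ^ m ^ 2 * z ^ m * qFactInv (q ^ 2) (m + N)) atTop
      (𝓝 (∑' m : ℤ, q ^ m ^ 2 * z ^ m * (qPochInf (q ^ 2) (q ^ 2))⁻¹)) :=
    tendsto_tsum_of_dominated_convergence (hsum.norm.mul_right M)
      (fun m => (tendsto_qFactInv_add_natCast hq2 m).const_mul _)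
      (.of_forall fun N m => by
        rw [norm_mul]
        exact mul_le_mul_of_nonneg_left (hM _) (norm_nonneg _))
  have hprod : Tendsto (fun N : ℕ => ∑' m : ℤ, q ^ m ^ 2 * z ^ m * qFactInv (q ^ 2) (m + N)) atTop
      (𝓝 (thetaProd q z)) := by
    simp only [(hasSum_finite_jacobi h0 h1 hz _).tsum_eq]
    rw [thetaProd, mul_comm (qPochInf (-(q * z)) _)]
    exact (tendsto_qPoch hq2 _).mul_const _
  have heq := tendsto_nhds_unique hprod hlim
  rw [tsum_mul_right, ← div_eq_mul_inv, eq_div_iff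
    (qPochInf_ne_zero hq2 (one_sub_mul_pow_self_ne_zero hq2))] at heq
  rw [heq]
  exact hsum.hasSum

lemma Jam_eq_thetaProd_mul (h0 : q ≠ 0) {A B : ℕ} (hB : B ≤ A) :
    Jam q (A - B) (2 * A) =
      thetaProd (q ^ A) (-q ^ B) * qPochInf ((q ^ A) ^ 2) ((q ^ A) ^ 2) := by
  have hpos : -(q ^ A * -q ^ B) = q ^ (A + B) := by ring
  have hneg : -(q ^ A / -q ^ B) = q ^ (A - B) := by
    rw [div_neg, neg_neg, pow_sub₀ q h0 hB, div_eq_mul_inv]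
  rw [Jam, thetaProd, hpos, hneg, ← pow_mul, mul_comm A, show 2 * A - (A - B) = A + B by lia,
    mul_comm (qPochInf (q ^ (A - B)) _)]

lemma hasSum_Jam (h0 : q ≠ 0) (h1 : ‖q‖ < 1) {A B : ℕ} (hA : A ≠ 0) (hB : B ≤ A) :
    HasSum (fun n : ℤ => (-1) ^ n * q ^ (A * n ^ 2 + B * n)) (Jam q (A - B) (2 * A)) := by
  have hterm (n : ℤ) :
      (-1) ^ n * q ^ (A * n ^ 2 + B * n) = (q ^ A) ^ n ^ 2 * (-q ^ B) ^ n := by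
    rw [← neg_one_mul (q ^ B), mul_zpow, ← zpow_natCast q A, ← zpow_natCast q B, ← zpow_mul,
      ← zpow_mul, zpow_add₀ h0]
    ring
  rw [Jam_eq_thetaProd_mul h0 hB, funext hterm]
  exact hasSum_jacobiTripleProduct (pow_ne_zero A h0) (norm_pow_lt_one h1 hA)
    (neg_ne_zero.2 (pow_ne_zero B h0))

end JacobiTripleProduct

section QuintupleProduct

variable {w x : ℂ}

lemma neg_one_zpow_eq_of_even_sub {m n : ℤ} (h : Even (m - n)) : (-1 : ℂ) ^ m = (-1) ^ n := by
  rw [← sub_add_cancel m n, zpow_add₀ (by norm_num), h.neg_one_zpow, one_mul]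

/-- The coefficient of index `b` in the power `x ^ N` of the product of the two theta series
`∑ (-1)^a w^(a²+a) x^a` and `∑ (-1)^b w^(2b²) x^(2b)`, where `N = a + 2b`. -/
noncomputable def quintupleSummand (w x : ℂ) (N b : ℤ) : ℂ :=
  (-1) ^ (N + b) * w ^ (N ^ 2 + N - 4 * N * b + 6 * b ^ 2 - 2 * b) * x ^ N

lemma quintupleSummand_three_mul (hw : w ≠ 0) (x : ℂ) (d c : ℤ) :
    quintupleSummand w x (3 * d) (d - c) =
      w ^ (3 * d ^ 2 + d) * x ^ (3 * d) * ((-1) ^ c * w ^ (6 * c ^ 2 + 2 * c)) := by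
  rw [quintupleSummand, neg_one_zpow_eq_of_even_sub (n := c) ⟨2 * d - c, by ring⟩,
    show (3 * d) ^ 2 + 3 * d - 4 * (3 * d) * (d - c) + 6 * (d - c) ^ 2 - 2 * (d - c) =
      3 * d ^ 2 + d + (6 * c ^ 2 + 2 * c) by ring, zpow_add₀ hw]
  ring

lemma quintupleSummand_three_mul_add_two (hw : w ≠ 0) (x : ℂ) (d c : ℤ) :
    quintupleSummand w x (3 * d + 2) (d + 1 + c) =
      -(w ^ (3 * d ^ 2 + 5 * d + 2) * x ^ (3 * d + 2)) *
        ((-1) ^ c * w ^ (6 * c ^ 2 + 2 * c)) := by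
  rw [quintupleSummand, neg_one_zpow_eq_of_even_sub (n := c + 1) ⟨2 * d + 1, by ring⟩,
    show (3 * d + 2) ^ 2 + (3 * d + 2) - 4 * (3 * d + 2) * (d + 1 + c) + 6 * (d + 1 + c) ^ 2 -
      2 * (d + 1 + c) = 3 * d ^ 2 + 5 * d + 2 + (6 * c ^ 2 + 2 * c) by ring, zpow_add₀ hw,
    zpow_add_one₀ (by norm_num)]
  ring

lemma quintupleSummand_three_mul_add_one_reflect (w x : ℂ) (d b : ℤ) :
    quintupleSummand w x (3 * d + 1) (2 * d + 1 - b) = -quintupleSummand w x (3 * d + 1) b := by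
  rw [quintupleSummand, quintupleSummand,
    neg_one_zpow_eq_of_even_sub (n := 3 * d + 1 + b + 1) ⟨d - b, by ring⟩,
    zpow_add_one₀ (by norm_num)]
  ring_nf

lemma tsum_quintupleSummand_three_mul (h0 : w ≠ 0) (h1 : ‖w‖ < 1) (x : ℂ) (d : ℤ) :
    ∑' b, quintupleSummand w x (3 * d) b = w ^ (3 * d ^ 2 + d) * x ^ (3 * d) * Jam w 4 12 := by
  rw [← (Equiv.subLeft d).tsum_eq]
  simp only [Equiv.subLeft_apply, quintupleSummand_three_mul h0]
  rw [tsum_mul_left, ← (hasSum_Jam (B := 2) h0 h1 (by norm_num : 6 ≠ 0) (by norm_num)).tsum_eq]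
  rfl

lemma tsum_quintupleSummand_three_mul_add_one (w x : ℂ) (d : ℤ) :
    ∑' b, quintupleSummand w x (3 * d + 1) b = 0 := by
  have hreflect := (Equiv.subLeft (2 * d + 1)).tsum_eq (quintupleSummand w x (3 * d + 1))
  simp only [Equiv.subLeft_apply, quintupleSummand_three_mul_add_one_reflect, tsum_neg] at hreflect
  exact neg_eq_self.1 hreflect

lemma tsum_quintupleSummand_three_mul_add_two (h0 : w ≠ 0) (h1 : ‖w‖ < 1) (x : ℂ) (d : ℤ) :
    ∑' b, quintupleSummand w x (3 * d + 2) b =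
      -(w ^ (3 * d ^ 2 + 5 * d + 2) * x ^ (3 * d + 2)) * Jam w 4 12 := by
  rw [← (Equiv.addLeft (d + 1)).tsum_eq]
  simp only [Equiv.coe_addLeft, quintupleSummand_three_mul_add_two h0]
  rw [tsum_mul_left, ← (hasSum_Jam (B := 2) h0 h1 (by norm_num : 6 ≠ 0) (by norm_num)).tsum_eq]
  rfl

lemma hasSum_int_three_mul {f : ℤ → ℂ} {s : ℂ} (hf : HasSum f s) :
    HasSum (fun d => f (3 * d) + f (3 * d + 1) + f (3 * d + 2)) s := by
  refine ((Int.divModEquiv 3).symm.hasSum_iff.2 hf).prod_fiberwise fun d => ?_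
  convert hasSum_fintype (fun r : Fin 3 => (f ∘ (Int.divModEquiv 3).symm) (d, r)) using 1
  simp [Fin.sum_univ_three, mul_comm, add_comm]

lemma Jam_four_twelve (h1 : ‖w‖ < 1) : Jam w 4 12 = J w 4 := by
  rw [J, qPochInf_eq_prod_multisection (norm_pow_lt_one h1 four_ne_zero) _ three_ne_zero]
  simp only [prod_range_succ, prod_range_zero, one_mul, Jam, ← pow_mul, ← pow_add]

lemma quintupleSummand_eq_mul (h0 : w ≠ 0) (hx : x ≠ 0) (N b : ℤ) :
    quintupleSummand w x N b = w ^ (N - 2 * b) ^ 2 * (-(w * x)) ^ (N - 2 * b) *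
      ((w ^ 2) ^ b ^ 2 * (-x ^ 2) ^ b) := by
  have hsign : (-1 : ℂ) ^ (N + b) = (-1) ^ (N - 2 * b) * (-1) ^ b := by
    rw [neg_one_zpow_eq_of_even_sub (n := N - 2 * b + b) ⟨b, by ring⟩, zpow_add₀ (by norm_num)]
  have hexp : N ^ 2 + N - 4 * N * b + 6 * b ^ 2 - 2 * b =
      (N - 2 * b) ^ 2 + (N - 2 * b) + 2 * b ^ 2 := by ring
  have hxpow : x ^ N = x ^ (N - 2 * b) * (x ^ 2) ^ b := by
    rw [← zpow_natCast x 2, ← zpow_mul, ← zpow_add₀ hx, Nat.cast_two, sub_add_cancel]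
  rw [quintupleSummand, hsign, hexp, hxpow, zpow_add₀ h0, zpow_add₀ h0, zpow_mul w 2,
    zpow_ofNat, ← neg_one_mul (w * x), ← neg_one_mul (x ^ 2), mul_zpow, mul_zpow, mul_zpow]
  ring

lemma hasSum_tsum_sub_mul {f g : ℤ → ℂ} {s t : ℂ} (hf : HasSum f s) (hg : HasSum g t) (m : ℤ) :
    HasSum (fun N => ∑' b, f (N - m * b) * g b) (s * t) := by
  let e : ℤ × ℤ ≃ ℤ × ℤ :=
    { toFun := fun p => (p.1 - m * p.2, p.2)
      invFun := fun p => (p.1 + m * p.2, p.2)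
      left_inv := fun p => by simp
      right_inv := fun p => by simp }
  have hsum := e.hasSum_iff.2
    (hf.mul hg (summable_mul_of_summable_norm hf.summable.norm hg.summable.norm))
  exact hsum.prod_fiberwise fun N => (hsum.summable.prod_factor N).hasSum

lemma hasSum_quintupleSummand (h0 : w ≠ 0) (h1 : ‖w‖ < 1) (hx : x ≠ 0) :
    HasSum (fun N => ∑' b, quintupleSummand w x N b)
      (thetaProd w (-(w * x)) * qPochInf (w ^ 2) (w ^ 2) *
        (thetaProd (w ^ 2) (-x ^ 2) * J w 4)) := by
  have hf := hasSum_jacobiTripleProduct h0 h1 (neg_ne_zero.2 (mul_ne_zero h0 hx))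
  have hg := hasSum_jacobiTripleProduct (pow_ne_zero 2 h0) (norm_pow_lt_one h1 two_ne_zero)
    (neg_ne_zero.2 (pow_ne_zero 2 hx))
  rw [J, show w ^ 4 = (w ^ 2) ^ 2 by ring]
  simpa only [quintupleSummand_eq_mul h0 hx] using hasSum_tsum_sub_mul hf hg 2

theorem hasSum_quintupleProduct (h0 : w ≠ 0) (h1 : ‖w‖ < 1) (hx : x ≠ 0) :
    HasSum
      (fun d : ℤ => w ^ (3 * d ^ 2 + d) * x ^ (3 * d) -
        w ^ (3 * d ^ 2 + 5 * d + 2) * x ^ (3 * d + 2))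
      (thetaProd w (-(w * x)) * qPochInf (w ^ 2) (w ^ 2) * thetaProd (w ^ 2) (-x ^ 2)) := by
  have hJ : J w 4 ≠ 0 := J_ne_zero h1 four_ne_zero
  have h := (hasSum_int_three_mul (hasSum_quintupleSummand h0 h1 hx)).mul_right (J w 4)⁻¹
  simp only [tsum_quintupleSummand_three_mul h0 h1, tsum_quintupleSummand_three_mul_add_one,
    tsum_quintupleSummand_three_mul_add_two h0 h1, Jam_four_twelve h1, add_zero, ← add_mul,
    mul_inv_cancel_right₀ hJ, ← sub_eq_add_neg, ← mul_assoc] at h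
  exact h

end QuintupleProduct

section BaileyPairs

variable {q : ℂ}

lemma qFactInv_pascal (h0 : q ≠ 0) (h1 : ‖q‖ < 1) (a b : ℤ) :
    (1 - q ^ (a + b)) * (qFactInv q a * qFactInv q b) =
      qFactInv q (a - 1) * qFactInv q b + q ^ a * (qFactInv q a * qFactInv q (b - 1)) := by
  rw [qFactInv_sub_one h1, qFactInv_sub_one h1, zpow_add₀ h0]
  ring

/-- The Bailey kernel `1 / ((q)_{n-r} (q)_{n+r})` (Bailey pairs relative to `a = 1`), which vanishes
outside `|r| ≤ n`. -/
noncomputable def evenKernel (q : ℂ) (n r : ℤ) : ℂ := qFactInv q (n - r) * qFactInv q (n + r)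

/-- The Bailey kernel `1 / ((q)_{n-r} (q)_{n+r+1})` (Bailey pairs relative to `a = q`, up to the
factor `1 - q`), which vanishes outside `-n-1 ≤ r ≤ n`. -/
noncomputable def oddKernel (q : ℂ) (n r : ℤ) : ℂ := qFactInv q (n - r) * qFactInv q (n + r + 1)

lemma evenKernel_neg (q : ℂ) (n r : ℤ) : evenKernel q n (-r) = evenKernel q n r := by
  rw [evenKernel, evenKernel, sub_neg_eq_add, ← sub_eq_add_neg, mul_comm]

lemma oddKernel_neg_one_sub (q : ℂ) (n r : ℤ) : oddKernel q n (-1 - r) = oddKernel q n r := by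
  rw [oddKernel, oddKernel, mul_comm]
  congr 2 <;> ring

lemma one_sub_mul_oddKernel (h0 : q ≠ 0) (h1 : ‖q‖ < 1) (n r : ℤ) :
    (1 - q ^ (2 * n + 1)) * oddKernel q n r =
      evenKernel q n (r + 1) + q ^ (n - r) * evenKernel q n r := by
  have h := qFactInv_pascal h0 h1 (n - r) (n + r + 1)
  rw [show n - r + (n + r + 1) = 2 * n + 1 by ring, add_sub_cancel_right, sub_sub] at h
  rw [oddKernel, evenKernel, evenKernel, ← add_assoc, h]

lemma one_sub_mul_oddKernel' (h0 : q ≠ 0) (h1 : ‖q‖ < 1) (n r : ℤ) :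
    (1 - q ^ (2 * n + 1)) * oddKernel q n r =
      evenKernel q n r + q ^ (n + r + 1) * evenKernel q n (r + 1) := by
  rw [← oddKernel_neg_one_sub, one_sub_mul_oddKernel h0 h1, ← evenKernel_neg q n r,
    ← evenKernel_neg q n (r + 1)]
  ring_nf

lemma one_sub_mul_evenKernel_succ (h0 : q ≠ 0) (h1 : ‖q‖ < 1) (n r : ℤ) :
    (1 - q ^ (2 * n + 2)) * evenKernel q (n + 1) r =
      oddKernel q n r + q ^ (n + 1 - r) * oddKernel q n (r - 1) := by
  have h := qFactInv_pascal h0 h1 (n + 1 - r) (n + 1 + r)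
  rw [show n + 1 - r + (n + 1 + r) = 2 * n + 2 by ring, show n + 1 - r - 1 = n - r by ring,
    show n + 1 + r - 1 = n + r by ring] at h
  rw [evenKernel, oddKernel, oddKernel, h, add_right_comm n r, show n - (r - 1) = n + 1 - r by ring,
    show n + (r - 1) + 1 = n + r by ring]

lemma one_sub_mul_evenKernel_succ' (h0 : q ≠ 0) (h1 : ‖q‖ < 1) (n r : ℤ) :
    (1 - q ^ (2 * n + 2)) * evenKernel q (n + 1) r =
      oddKernel q n (r - 1) + q ^ (n + 1 + r) * oddKernel q n r := by
  rw [← evenKernel_neg, one_sub_mul_evenKernel_succ h0 h1, ← oddKernel_neg_one_sub q n r,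
    ← oddKernel_neg_one_sub q n (r - 1)]
  ring_nf

lemma exists_norm_evenKernel_le (h1 : ‖q‖ < 1) : ∃ M, ∀ n r, ‖evenKernel q n r‖ ≤ M := by
  obtain ⟨M, hM⟩ := exists_norm_qFactInv_le h1
  exact ⟨M * M, fun n r => norm_mul_le_of_le (hM _) (hM _)⟩

lemma exists_norm_oddKernel_le (h1 : ‖q‖ < 1) : ∃ M, ∀ n r, ‖oddKernel q n r‖ ≤ M := by
  obtain ⟨M, hM⟩ := exists_norm_qFactInv_le h1
  exact ⟨M * M, fun n r => norm_mul_le_of_le (hM _) (hM _)⟩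

lemma evenKernel_zero_left (q : ℂ) {r : ℤ} (hr : r ≠ 0) : evenKernel q 0 r = 0 := by
  rcases hr.lt_or_gt with hr | hr
  · rw [evenKernel, qFactInv_of_neg q (n := 0 + r) (by lia), mul_zero]
  · rw [evenKernel, qFactInv_of_neg q (n := 0 - r) (by lia), zero_mul]

lemma evenKernel_zero_zero (q : ℂ) : evenKernel q 0 0 = 1 := by simp [evenKernel, qFactInv]

lemma qFactInv_two_mul (h1 : ‖q‖ < 1) (n : ℤ) :
    qFactInv q (2 * n) =
      (1 - q ^ (2 * n + 1)) * ((1 - q ^ (2 * n + 2)) * qFactInv q (2 * (n + 1))) := by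
  have h := qFactInv_sub_one h1 (2 * n + 2)
  have h' := qFactInv_sub_one h1 (2 * n + 1)
  rw [show 2 * n + 2 - 1 = 2 * n + 1 by ring] at h
  rw [add_sub_cancel_right] at h'
  rw [h', h, mul_add_one]

lemma one_sub_zpow_ne_zero (h1 : ‖q‖ < 1) {n : ℤ} (hn : 0 < n) : 1 - q ^ n ≠ 0 := by
  lift n to ℕ using hn.le
  rw [zpow_natCast]
  exact one_sub_pow_ne_zero h1 (by lia)

lemma summable_neg_one_zpow_mul_kernel (h0 : q ≠ 0) (h1 : ‖q‖ < 1) {f : ℤ → ℂ} {M : ℝ}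
    (hf : ∀ n, ‖f n‖ ≤ M) (b : ℤ) : Summable fun r : ℤ => (-1) ^ r * q ^ (r ^ 2 + b * r) * f r := by
  refine (summable_zpow_quadratic_mul (f := fun r => (-1) ^ r * f r) h0 h1 one_ne_zero b 0
    (M := M) fun r => by simpa using hf r).congr fun r => ?_
  rw [Nat.cast_one, one_mul, add_zero]
  ring

lemma summable_comp_neg {f : ℤ → ℂ} (hf : Summable f) : Summable fun n => f (-n) :=
  (Equiv.neg ℤ).summable_iff.2 hf

lemma tsum_neg_one_zpow_evenKernel_succ (h0 : q ≠ 0) (h1 : ‖q‖ < 1) (n : ℤ) :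
    (1 - q ^ (2 * n + 2)) * ∑' r : ℤ, (-1) ^ r * q ^ (r ^ 2 + r) * evenKernel q (n + 1) (2 * r) =
      (1 + q ^ (n + 1)) * ∑' r : ℤ, (-1) ^ r * q ^ (r ^ 2 + r) * oddKernel q n (2 * r) := by
  set f := fun r : ℤ => (-1) ^ r * q ^ (r ^ 2 + r) * oddKernel q n (2 * r) with hf_def
  have hf : Summable f := by
    obtain ⟨M, hM⟩ := exists_norm_oddKernel_le h1
    simpa only [one_mul] using summable_neg_one_zpow_mul_kernel h0 h1 (fun r => hM n (2 * r)) 1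
  have hf_neg : Summable fun r => f (-r) := summable_comp_neg hf
  have hterm (r : ℤ) : (1 - q ^ (2 * n + 2)) *
      ((-1) ^ r * q ^ (r ^ 2 + r) * evenKernel q (n + 1) (2 * r)) =
      f r + q ^ (n + 1) * f (-r) := by
    have hpow : q ^ (r ^ 2 + r) * q ^ (n + 1 - 2 * r) = q ^ (n + 1) * q ^ ((-r) ^ 2 + -r) := by
      rw [← zpow_add₀ h0, ← zpow_add₀ h0]
      ring_nf
    have hreflect : oddKernel q n (2 * -r) = oddKernel q n (2 * r - 1) := by
      rw [← oddKernel_neg_one_sub]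
      ring_nf
    simp only [hf_def, hreflect, zpow_neg (-1 : ℂ) r, ← inv_zpow, inv_neg, inv_one]
    linear_combination (-1) ^ r * q ^ (r ^ 2 + r) * one_sub_mul_evenKernel_succ h0 h1 n (2 * r) +
      (-1) ^ r * oddKernel q n (2 * r - 1) * hpow
  rw [← tsum_mul_left, tsum_congr hterm, hf.tsum_add (hf_neg.mul_left _), tsum_mul_left,
    tsum_comp_neg]
  ring

lemma tsum_neg_one_zpow_oddKernel (h0 : q ≠ 0) (h1 : ‖q‖ < 1) (n : ℤ) :
    (1 - q ^ (2 * n + 1)) * ∑' r : ℤ, (-1) ^ r * q ^ (r ^ 2 + r) * oddKernel q n (2 * r) =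
      q ^ n * ∑' r : ℤ, (-1) ^ r * q ^ (r ^ 2 + r) * evenKernel q n (2 * r) := by
  obtain ⟨M, hM⟩ := exists_norm_evenKernel_le h1
  set f := fun r : ℤ => (-1) ^ r * q ^ (r ^ 2 + r) * evenKernel q n (2 * r) with hf_def
  set g := fun r : ℤ => (-1) ^ r * q ^ (r ^ 2 + r) * evenKernel q n (2 * r + 1) with hg_def
  have hf : Summable f := by
    simpa only [one_mul] using summable_neg_one_zpow_mul_kernel h0 h1 (fun r => hM n (2 * r)) 1
  have hf_neg : Summable fun r => f (-r) := summable_comp_neg hf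
  have hg : Summable g := by
    simpa only [one_mul] using summable_neg_one_zpow_mul_kernel h0 h1 (fun r => hM n (2 * r + 1)) 1
  have hg_reflect (r : ℤ) : g (-1 - r) = -g r := by
    simp only [hg_def]
    rw [zpow_sub₀ (by norm_num), ← evenKernel_neg q n (2 * r + 1), div_eq_mul_inv, ← inv_zpow]
    ring_nf
  have hg_zero : ∑' r, g r = 0 := by
    rw [← CharZero.eq_neg_self_iff, ← tsum_neg, ← tsum_congr hg_reflect]
    exact ((Equiv.subLeft (-1 : ℤ)).tsum_eq g).symm
  have hterm (r : ℤ) : (1 - q ^ (2 * n + 1)) *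
      ((-1) ^ r * q ^ (r ^ 2 + r) * oddKernel q n (2 * r)) = g r + q ^ n * f (-r) := by
    have hpow : q ^ (r ^ 2 + r) * q ^ (n - 2 * r) = q ^ n * q ^ ((-r) ^ 2 + -r) := by
      rw [← zpow_add₀ h0, ← zpow_add₀ h0]
      ring_nf
    simp only [hf_def, hg_def, mul_neg, evenKernel_neg, zpow_neg (-1 : ℂ) r, ← inv_zpow, inv_neg,
      inv_one]
    linear_combination (-1) ^ r * q ^ (r ^ 2 + r) * one_sub_mul_oddKernel h0 h1 n (2 * r) +
      (-1) ^ r * evenKernel q n (2 * r) * hpow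
  rw [← tsum_mul_left, tsum_congr hterm, hg.tsum_add (hf_neg.mul_left _), hg_zero, zero_add,
    tsum_mul_left, tsum_comp_neg]

theorem tsum_neg_one_zpow_evenKernel (h0 : q ≠ 0) (h1 : ‖q‖ < 1) (n : ℕ) :
    ∑' r : ℤ, (-1) ^ r * q ^ (r ^ 2 + r) * evenKernel q n (2 * r) =
      q ^ n.choose 2 * qPoch (-q) q n * qFactInv q (2 * n) := by
  induction n with
  | zero =>
    rw [tsum_eq_single 0 fun r hr => by
      rw [Nat.cast_zero, evenKernel_zero_left q (by simpa using hr), mul_zero]]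
    simp [evenKernel_zero_zero, qFactInv, qPoch_zero]
  | succ n ih =>
    have h2n1 := one_sub_zpow_ne_zero h1 (n := 2 * n + 1) (by lia)
    have h2n2 := one_sub_zpow_ne_zero h1 (n := 2 * n + 2) (by lia)
    have hrec := tsum_neg_one_zpow_evenKernel_succ h0 h1 n
    have hrec' := tsum_neg_one_zpow_oddKernel h0 h1 n
    rw [ih, qFactInv_two_mul h1] at hrec'
    refine mul_left_cancel₀ (mul_ne_zero h2n1 h2n2) ?_
    rw [Nat.cast_succ, qPoch_succ, Nat.choose_succ_left n 2 two_pos, Nat.choose_one_right, pow_add]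
    have hpow : q ^ (n + 1 : ℤ) = q * q ^ n := by rw [zpow_add_one₀ h0, zpow_natCast, mul_comm]
    rw [hpow] at hrec
    rw [zpow_natCast] at hrec'
    linear_combination (1 - q ^ (2 * n + 1 : ℤ)) * hrec + (1 + q * q ^ n) * hrec'

lemma tsum_sub_shift_reflect {P Q : ℤ → ℂ} (hP : Summable P) (hQ : Summable Q) :
    ∑' c, (P c - Q (c + 1)) = ∑' c, (P (-c) - Q (-c)) := by
  have hQ' : Summable fun c => Q (c + 1) := (Equiv.addRight (1 : ℤ)).summable_iff.2 hQ
  have htsum_shift : ∑' c, Q (c + 1) = ∑' c, Q c := (Equiv.addRight (1 : ℤ)).tsum_eq Q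
  rw [hP.tsum_sub hQ', htsum_shift, ← hP.tsum_sub hQ]
  exact ((Equiv.neg ℤ).tsum_eq fun c => P c - Q c).symm

lemma summable_zpow_three_mul_kernel (h0 : q ≠ 0) (h1 : ‖q‖ < 1) {f : ℤ → ℂ} {M : ℝ}
    (hf : ∀ n, ‖f n‖ ≤ M) (b : ℤ) : Summable fun c : ℤ => q ^ (3 * c ^ 2 - b * c) * f c := by
  refine (summable_zpow_quadratic_mul h0 h1 three_ne_zero (-b) 0 hf).congr fun c => ?_
  rw [Nat.cast_ofNat, add_zero, neg_mul, ← sub_eq_add_neg]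

lemma tsum_zpow_mul_oddKernel_sub (h0 : q ≠ 0) (h1 : ‖q‖ < 1) (n : ℤ) :
    (1 - q ^ (2 * n + 1)) * ∑' c : ℤ, q ^ (3 * c ^ 2 + 2 * c) *
        (oddKernel q n (3 * c) - oddKernel q n (3 * c + 1)) =
      q ^ n * ∑' c : ℤ, q ^ (3 * c ^ 2 + c) *
        (evenKernel q n (3 * c) - evenKernel q n (3 * c + 1)) := by
  obtain ⟨M, hM⟩ := exists_norm_evenKernel_le h1
  set P := fun c : ℤ => q ^ (3 * c ^ 2 - 1 * c) * evenKernel q n (3 * c) with hP_def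
  set Q := fun c : ℤ => q ^ (3 * c ^ 2 - 1 * c) * evenKernel q n (3 * c - 1) with hQ_def
  have hP : Summable P := summable_zpow_three_mul_kernel h0 h1 (fun c => hM n _) 1
  have hQ : Summable Q := summable_zpow_three_mul_kernel h0 h1 (fun c => hM n _) 1
  have hterm (c : ℤ) : (1 - q ^ (2 * n + 1)) * (q ^ (3 * c ^ 2 + 2 * c) *
      (oddKernel q n (3 * c) - oddKernel q n (3 * c + 1))) = q ^ n * (P c - Q (c + 1)) := by
    have hpowP : q ^ (3 * c ^ 2 + 2 * c) * q ^ (n - 3 * c) = q ^ n * q ^ (3 * c ^ 2 - 1 * c) := by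
      rw [← zpow_add₀ h0, ← zpow_add₀ h0]
      ring_nf
    have hpowQ : q ^ (3 * c ^ 2 + 2 * c) * q ^ (n + (3 * c + 1) + 1) =
        q ^ n * q ^ (3 * (c + 1) ^ 2 - 1 * (c + 1)) := by
      rw [← zpow_add₀ h0, ← zpow_add₀ h0]
      ring_nf
    simp only [hP_def, hQ_def, show 3 * (c + 1) - 1 = 3 * c + 1 + 1 by ring]
    linear_combination q ^ (3 * c ^ 2 + 2 * c) * (one_sub_mul_oddKernel h0 h1 n (3 * c) -
        one_sub_mul_oddKernel' h0 h1 n (3 * c + 1)) +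
      evenKernel q n (3 * c) * hpowP - evenKernel q n (3 * c + 1 + 1) * hpowQ
  have hreflect (c : ℤ) : P (-c) - Q (-c) =
      q ^ (3 * c ^ 2 + c) * (evenKernel q n (3 * c) - evenKernel q n (3 * c + 1)) := by
    simp only [hP_def, hQ_def]
    rw [← evenKernel_neg q n (3 * c), ← evenKernel_neg q n (3 * c + 1)]
    ring_nf
  rw [← tsum_mul_left, tsum_congr hterm, tsum_mul_left, tsum_sub_shift_reflect hP hQ,
    tsum_congr hreflect]

lemma tsum_zpow_mul_evenKernel_sub_succ (h0 : q ≠ 0) (h1 : ‖q‖ < 1) (n : ℤ) :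
    (1 - q ^ (2 * n + 2)) * ∑' c : ℤ, q ^ (3 * c ^ 2 + c) *
        (evenKernel q (n + 1) (3 * c) - evenKernel q (n + 1) (3 * c + 1)) =
      q ^ (n + 1) * ∑' c : ℤ, q ^ (3 * c ^ 2 + 2 * c) *
        (oddKernel q n (3 * c) - oddKernel q n (3 * c + 1)) := by
  obtain ⟨M, hM⟩ := exists_norm_oddKernel_le h1
  set P := fun c : ℤ => q ^ (3 * c ^ 2 - 2 * c) * oddKernel q n (3 * c - 1) with hP_def
  set Q := fun c : ℤ => q ^ (3 * c ^ 2 - 2 * c) * oddKernel q n (3 * c - 2) with hQ_def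
  have hP : Summable P := summable_zpow_three_mul_kernel h0 h1 (fun c => hM n _) 2
  have hQ : Summable Q := summable_zpow_three_mul_kernel h0 h1 (fun c => hM n _) 2
  have hterm (c : ℤ) : (1 - q ^ (2 * n + 2)) * (q ^ (3 * c ^ 2 + c) *
      (evenKernel q (n + 1) (3 * c) - evenKernel q (n + 1) (3 * c + 1))) =
      q ^ (n + 1) * (P c - Q (c + 1)) := by
    have hpowP : q ^ (3 * c ^ 2 + c) * q ^ (n + 1 - 3 * c) =
        q ^ (n + 1) * q ^ (3 * c ^ 2 - 2 * c) := by
      rw [← zpow_add₀ h0, ← zpow_add₀ h0]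
      ring_nf
    have hpowQ : q ^ (3 * c ^ 2 + c) * q ^ (n + 1 + (3 * c + 1)) =
        q ^ (n + 1) * q ^ (3 * (c + 1) ^ 2 - 2 * (c + 1)) := by
      rw [← zpow_add₀ h0, ← zpow_add₀ h0]
      ring_nf
    have hsucc := one_sub_mul_evenKernel_succ' h0 h1 n (3 * c + 1)
    rw [add_sub_cancel_right] at hsucc
    simp only [hP_def, hQ_def, show 3 * (c + 1) - 2 = 3 * c + 1 by ring]
    linear_combination q ^ (3 * c ^ 2 + c) *
        (one_sub_mul_evenKernel_succ h0 h1 n (3 * c) - hsucc) +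
      oddKernel q n (3 * c - 1) * hpowP - oddKernel q n (3 * c + 1) * hpowQ
  have hreflect (c : ℤ) : P (-c) - Q (-c) =
      q ^ (3 * c ^ 2 + 2 * c) * (oddKernel q n (3 * c) - oddKernel q n (3 * c + 1)) := by
    simp only [hP_def, hQ_def]
    rw [← oddKernel_neg_one_sub q n (3 * c), ← oddKernel_neg_one_sub q n (3 * c + 1)]
    ring_nf
  rw [← tsum_mul_left, tsum_congr hterm, tsum_mul_left, tsum_sub_shift_reflect hP hQ,
    tsum_congr hreflect]

lemma tsum_zpow_mul_evenKernel_sub (h0 : q ≠ 0) (h1 : ‖q‖ < 1) (n : ℕ) :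
    ∑' c : ℤ, q ^ (3 * c ^ 2 + c) * (evenKernel q n (3 * c) - evenKernel q n (3 * c + 1)) =
      q ^ n ^ 2 * qFactInv q (2 * n) := by
  induction n with
  | zero =>
    rw [tsum_eq_single 0 fun c hc => by
      rw [Nat.cast_zero, evenKernel_zero_left q (by lia), evenKernel_zero_left q (by lia), sub_zero,
        mul_zero]]
    simp [evenKernel_zero_zero, evenKernel_zero_left, qFactInv, qPoch_zero]
  | succ n ih =>
    have h2n1 := one_sub_zpow_ne_zero h1 (n := 2 * n + 1) (by lia)
    have h2n2 := one_sub_zpow_ne_zero h1 (n := 2 * n + 2) (by lia)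
    have hrec := tsum_zpow_mul_evenKernel_sub_succ h0 h1 n
    have hrec' := tsum_zpow_mul_oddKernel_sub h0 h1 n
    rw [ih, qFactInv_two_mul h1, zpow_natCast] at hrec'
    rw [zpow_add_one₀ h0, zpow_natCast] at hrec
    refine mul_left_cancel₀ (mul_ne_zero h2n1 h2n2) ?_
    rw [Nat.cast_succ, show (n + 1) ^ 2 = n ^ 2 + n + n + 1 by ring, pow_succ, pow_add, pow_add]
    linear_combination (1 - q ^ (2 * n + 1 : ℤ)) * hrec + q ^ n * q * hrec'

theorem tsum_zpow_mul_oddKernel_sub_eq (h0 : q ≠ 0) (h1 : ‖q‖ < 1) (n : ℕ) :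
    ∑' c : ℤ, q ^ (3 * c ^ 2 + 2 * c) * (oddKernel q n (3 * c) - oddKernel q n (3 * c + 1)) =
      q ^ (n ^ 2 + n) * qFactInv q (2 * n + 1) := by
  have hrec := tsum_zpow_mul_oddKernel_sub h0 h1 n
  have hR := qFactInv_sub_one h1 (2 * n + 1)
  rw [add_sub_cancel_right] at hR
  rw [tsum_zpow_mul_evenKernel_sub h0 h1, hR, zpow_natCast] at hrec
  refine mul_left_cancel₀ (one_sub_zpow_ne_zero h1 (n := 2 * n + 1) (by lia)) ?_
  rw [pow_add]
  linear_combination hrec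

end BaileyPairs

section ConjugateBaileyPairs

variable {q u : ℂ}

lemma hasSum_oneOnePhiNum_mul_qFactInv (h1 : ‖q‖ < 1) (d : ℂ) (ε r : ℕ) :
    HasSum (fun n : ℕ => oneOnePhiNum q (q ^ (ε + 1)) d n *
        (qFactInv q (n - r) * qFactInv q (n + r + ε)))
      (oneOnePhiNum q (q ^ (ε + 1)) d r * (qPochInf (d * q ^ r) q / qPochInf q q)) := by
  have hc (n : ℕ) : 1 - q ^ (2 * r + ε + 1) * q ^ n ≠ 0 := by
    rw [← pow_add]
    exact one_sub_pow_ne_zero h1 (by lia)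
  have hvalue : qPochInf (d * q ^ r) q / qPochInf q q = (qPoch q q (2 * r + ε))⁻¹ *
      (qPochInf (d * q ^ r) q / qPochInf (q ^ (2 * r + ε + 1)) q) := by
    rw [qPochInf_eq_qPoch_mul h1 q (2 * r + ε), ← pow_succ', div_mul_eq_div_div, div_right_comm]
    ring
  have hterm (m : ℕ) : oneOnePhiNum q (q ^ (ε + 1)) d (m + r) *
      (qFactInv q ((m + r : ℕ) - r) * qFactInv q ((m + r : ℕ) + r + ε)) =
      oneOnePhiNum q (q ^ (ε + 1)) d r * ((qPoch q q (2 * r + ε))⁻¹ *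
        oneOnePhiTerm q (q ^ (2 * r + ε + 1)) (d * q ^ r) m) := by
    rw [show ((m + r : ℕ) - r : ℤ) = m by lia,
      show ((m + r : ℕ) + r + ε : ℤ) = (2 * r + ε + m : ℕ) by lia, qFactInv_natCast,
      qFactInv_natCast, qPoch_add, ← pow_succ', add_comm m r, oneOnePhiNum_add, oneOnePhiTerm,
      ← pow_add, show ε + 1 + 2 * r = 2 * r + ε + 1 by ring, mul_inv, div_eq_mul_inv, mul_inv]
    ring
  rw [hvalue, ← (add_left_injective r).hasSum_iff]
  · rw [Function.comp_def, funext hterm]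
    exact ((hasSum_oneOnePhiTerm h1 hc _).mul_left _).mul_left _
  · intro n hn
    have hnr : n < r := by
      by_contra! h
      exact hn ⟨n - r, Nat.sub_add_cancel h⟩
    rw [qFactInv_of_neg q (by lia), zero_mul, mul_zero]

lemma hasSum_pow_sq_mul_evenKernel (h1 : ‖q‖ < 1) (r : ℤ) :
    HasSum (fun n : ℕ => q ^ n ^ 2 * evenKernel q n r) (q ^ r ^ 2 / qPochInf q q) := by
  have hnum (n : ℕ) : oneOnePhiNum q (q ^ (0 + 1)) 0 n = q ^ n ^ 2 := by
    induction n with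
    | zero => simp [oneOnePhiNum]
    | succ n ih => rw [oneOnePhiNum_succ, ih]; ring
  have hnat (s : ℕ) :
      HasSum (fun n : ℕ => q ^ n ^ 2 * evenKernel q n s) (q ^ s ^ 2 / qPochInf q q) := by
    have h := hasSum_oneOnePhiNum_mul_qFactInv h1 0 0 s
    simpa only [hnum, zero_mul, qPochInf_zero_left, mul_one_div, Nat.cast_zero, add_zero] using! h
  obtain ⟨s, rfl | rfl⟩ := r.eq_nat_or_neg
  · exact_mod_cast hnat s
  · simpa only [evenKernel_neg, neg_sq] using mod_cast hnat s

lemma hasSum_pow_sq_mul_oddKernel (h1 : ‖u‖ < 1) (r : ℤ) :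
    HasSum (fun n : ℕ => u ^ n ^ 2 * qPoch (-u) (u ^ 2) (n + 1) * oddKernel (u ^ 2) n r)
      ((u ^ r ^ 2 + u ^ (r + 1) ^ 2) *
        (qPochInf (-u) (u ^ 2) / qPochInf (u ^ 2) (u ^ 2))) := by
  have h1' : ‖u ^ 2‖ < 1 := norm_pow_lt_one h1 two_ne_zero
  have hnum (n : ℕ) : (1 + u) * oneOnePhiNum (u ^ 2) ((u ^ 2) ^ (1 + 1)) (-u) n =
      u ^ n ^ 2 * qPoch (-u) (u ^ 2) (n + 1) := by
    induction n with
    | zero => simp [oneOnePhiNum, qPoch]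
    | succ n ih => rw [oneOnePhiNum_succ, ← mul_assoc, ih, qPoch_succ _ _ (n + 1)]; ring
  have hnat (s : ℕ) :
      HasSum (fun n : ℕ => u ^ n ^ 2 * qPoch (-u) (u ^ 2) (n + 1) * oddKernel (u ^ 2) n s)
        ((u ^ s ^ 2 + u ^ (s + 1) ^ 2) *
          (qPochInf (-u) (u ^ 2) / qPochInf (u ^ 2) (u ^ 2))) := by
    have h := (hasSum_oneOnePhiNum_mul_qFactInv h1' (-u) 1 s).mul_left (1 + u)
    simp only [← mul_assoc (1 + u), hnum] at h
    have hvalue : (u ^ s ^ 2 + u ^ (s + 1) ^ 2) *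
        (qPochInf (-u) (u ^ 2) / qPochInf (u ^ 2) (u ^ 2)) =
        u ^ s ^ 2 * qPoch (-u) (u ^ 2) (s + 1) *
          (qPochInf (-u * (u ^ 2) ^ s) (u ^ 2) / qPochInf (u ^ 2) (u ^ 2)) := by
      rw [qPochInf_eq_qPoch_mul h1' (-u) s, qPoch_succ]
      ring
    rw [hvalue]
    exact h
  obtain ⟨s, rfl⟩ | ⟨s, rfl⟩ : (∃ s : ℕ, r = s) ∨ ∃ s : ℕ, r = -1 - s := by
    rcases le_or_gt 0 r with hr | hr
    · exact .inl ⟨r.toNat, by lia⟩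
    · exact .inr ⟨(-1 - r).toNat, by lia⟩
  · exact_mod_cast hnat s
  · simp only [oddKernel_neg_one_sub]
    rw [add_comm, show (-1 - (s : ℤ) + 1) ^ 2 = (s ^ 2 : ℕ) by push_cast; ring,
      show (-1 - (s : ℤ)) ^ 2 = ((s + 1) ^ 2 : ℕ) by push_cast; ring]
    exact_mod_cast hnat s

end ConjugateBaileyPairs

section SlaterIdentities

variable {q u : ℂ}

lemma tsum_mul_tsum_mul_comm {ι κ : Type*} {α : ι → ℂ} {δ : κ → ℂ} {K : κ → ι → ℂ} {M : ℝ}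
    (hα : Summable α) (hδ : Summable δ) (hK : ∀ n r, ‖K n r‖ ≤ M) :
    ∑' n, δ n * ∑' r, α r * K n r = ∑' r, α r * ∑' n, δ n * K n r := by
  have hsum : Summable fun p : κ × ι => δ p.1 * α p.2 * K p.1 p.2 := by
    refine .of_norm_bounded ((hδ.norm.mul_norm hα.norm).mul_right M) fun p => ?_
    rw [norm_mul]
    exact mul_le_mul_of_nonneg_left (hK _ _) (norm_nonneg _)
  calc
    _ = ∑' (n) (r), δ n * α r * K n r := by simp only [← tsum_mul_left, mul_assoc]
    _ = ∑' (r) (n), δ n * α r * K n r :=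
      (Summable.tsum_comm (f := fun n r => δ n * α r * K n r) hsum).symm
    _ = _ := by simp only [← tsum_mul_left, mul_left_comm, mul_assoc]

lemma summable_pow_sq (h1 : ‖q‖ < 1) : Summable fun n : ℕ => q ^ n ^ 2 := by
  refine .of_norm_bounded (summable_geometric_of_lt_one (norm_nonneg q) h1) fun n => ?_
  rw [norm_pow]
  exact pow_le_pow_of_le_one (norm_nonneg q) h1.le (Nat.le_self_pow two_ne_zero n)

theorem tsum_slater46 (h0 : q ≠ 0) (h1 : ‖q‖ < 1) :
    ∑' n : ℕ, q ^ n ^ 2 * (q ^ n.choose 2 * qPoch (-q) q n * qFactInv q (2 * n)) =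
      Jam q 4 10 / J q 1 := by
  obtain ⟨M, hM⟩ := exists_norm_evenKernel_le h1
  have hα : Summable fun r : ℤ => (-1) ^ r * q ^ (r ^ 2 + r) := by
    simpa using summable_neg_one_zpow_mul_kernel (f := fun _ => 1) (M := 1) h0 h1 (by simp) 1
  have hterm (r : ℤ) : (-1) ^ r * q ^ (r ^ 2 + r) * (q ^ (2 * r) ^ 2 / qPochInf q q) =
      (-1) ^ r * q ^ ((5 : ℕ) * r ^ 2 + (1 : ℕ) * r) / qPochInf q q := by
    rw [mul_div_assoc', mul_assoc, ← zpow_add₀ h0]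
    congr 3
    push_cast
    ring
  calc
    _ = ∑' n : ℕ, q ^ n ^ 2 * ∑' r : ℤ, (-1) ^ r * q ^ (r ^ 2 + r) * evenKernel q n (2 * r) :=
      tsum_congr fun n => by rw [tsum_neg_one_zpow_evenKernel h0 h1]
    _ = ∑' r : ℤ, (-1) ^ r * q ^ (r ^ 2 + r) * ∑' n : ℕ, q ^ n ^ 2 * evenKernel q n (2 * r) :=
      tsum_mul_tsum_mul_comm hα (summable_pow_sq h1) fun n r => hM n (2 * r)
    _ = ∑' r : ℤ, (-1) ^ r * q ^ ((5 : ℕ) * r ^ 2 + (1 : ℕ) * r) / qPochInf q q :=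
      tsum_congr fun r => by rw [(hasSum_pow_sq_mul_evenKernel h1 _).tsum_eq, hterm]
    _ = Jam q 4 10 / J q 1 := by
      rw [tsum_div_const, (hasSum_Jam h0 h1 (by lia) (by lia)).tsum_eq, J, pow_one]

theorem tsum_slater97 (h0 : u ≠ 0) (h1 : ‖u‖ < 1) :
    ∑' n : ℕ, u ^ n ^ 2 * qPoch (-u) (u ^ 2) (n + 1) *
        ((u ^ 2) ^ (n ^ 2 + n) * qFactInv (u ^ 2) (2 * n + 1)) =
      (∑' c : ℤ, (u ^ (15 * c ^ 2 + 4 * c) - u ^ (15 * c ^ 2 + 16 * c + 4))) *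
        (qPochInf (-u) (u ^ 2) / qPochInf (u ^ 2) (u ^ 2)) := by
  have h0' : u ^ 2 ≠ 0 := pow_ne_zero 2 h0
  have h1' : ‖u ^ 2‖ < 1 := norm_pow_lt_one h1 two_ne_zero
  obtain ⟨M, hM⟩ := exists_norm_oddKernel_le h1'
  obtain ⟨B, hB⟩ := exists_norm_qPoch_le h1' (-u)
  have hα : Summable fun c : ℤ => (u ^ 2) ^ (3 * c ^ 2 + 2 * c) := by
    simpa using summable_zpow_quadratic h0' h1' three_ne_zero 2 0
  have hδ : Summable fun n : ℕ => u ^ n ^ 2 * qPoch (-u) (u ^ 2) (n + 1) :=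
    .of_norm_bounded ((summable_pow_sq h1).norm.mul_right B) fun n =>
      norm_mul_le_of_le le_rfl (hB _)
  have hterm (c : ℤ) : (u ^ 2) ^ (3 * c ^ 2 + 2 * c) *
      (u ^ (3 * c) ^ 2 + u ^ (3 * c + 1) ^ 2 - (u ^ (3 * c + 1) ^ 2 + u ^ (3 * c + 1 + 1) ^ 2)) =
      u ^ (15 * c ^ 2 + 4 * c) - u ^ (15 * c ^ 2 + 16 * c + 4) := by
    rw [add_comm (u ^ (3 * c) ^ 2), add_sub_add_left_eq_sub, mul_sub,
      ← zpow_natCast u 2, ← zpow_mul, ← zpow_add₀ h0, ← zpow_add₀ h0]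
    ring_nf
  calc
    _ = ∑' n : ℕ, u ^ n ^ 2 * qPoch (-u) (u ^ 2) (n + 1) *
        ∑' c : ℤ, (u ^ 2) ^ (3 * c ^ 2 + 2 * c) *
          (oddKernel (u ^ 2) n (3 * c) - oddKernel (u ^ 2) n (3 * c + 1)) :=
      tsum_congr fun n => by rw [tsum_zpow_mul_oddKernel_sub_eq h0' h1']
    _ = ∑' c : ℤ, (u ^ 2) ^ (3 * c ^ 2 + 2 * c) *
        ∑' n : ℕ, u ^ n ^ 2 * qPoch (-u) (u ^ 2) (n + 1) *
          (oddKernel (u ^ 2) n (3 * c) - oddKernel (u ^ 2) n (3 * c + 1)) :=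
      tsum_mul_tsum_mul_comm hα hδ fun n c => norm_sub_le_of_le (hM n (3 * c)) (hM n (3 * c + 1))
    _ = ∑' c : ℤ, (u ^ (15 * c ^ 2 + 4 * c) - u ^ (15 * c ^ 2 + 16 * c + 4)) *
        (qPochInf (-u) (u ^ 2) / qPochInf (u ^ 2) (u ^ 2)) := by
      refine tsum_congr fun c => ?_
      simp only [mul_sub (_ * _)]
      rw [((hasSum_pow_sq_mul_oddKernel h1 (3 * c)).sub
        (hasSum_pow_sq_mul_oddKernel h1 (3 * c + 1))).tsum_eq, ← sub_mul, ← mul_assoc, hterm]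
    _ = _ := tsum_mul_right

end SlaterIdentities

section QuintupleSpecialization

variable {u : ℂ}

lemma thetaProd_inv (q z : ℂ) : thetaProd q z⁻¹ = thetaProd q z := by
  rw [thetaProd, thetaProd, div_inv_eq_mul, ← div_eq_mul_inv, mul_comm]

lemma tsum_zpow_sub_zpow_quintuple (h0 : u ≠ 0) (h1 : ‖u‖ < 1) :
    ∑' c : ℤ, (u ^ (15 * c ^ 2 + 4 * c) - u ^ (15 * c ^ 2 + 16 * c + 4)) =
      Jam u 3 10 * Jam u 4 20 / J u 20 := by
  set f := fun c : ℤ => u ^ (15 * c ^ 2 + 4 * c) with hf_def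
  set g := fun c : ℤ => u ^ (15 * c ^ 2 + 16 * c + 4) with hg_def
  have hf : Summable f := by
    simpa using summable_zpow_quadratic h0 h1 (A := 15) (by lia) 4 0
  have hg : Summable g := by
    simpa using summable_zpow_quadratic h0 h1 (A := 15) (by lia) 16 4
  have hf_neg : Summable fun c => f (-c) := summable_comp_neg hf
  have hterm (c : ℤ) : f (-c) - g c =
      (u ^ 5) ^ (3 * c ^ 2 + c) * (u ^ 3)⁻¹ ^ (3 * c) -
        (u ^ 5) ^ (3 * c ^ 2 + 5 * c + 2) * (u ^ 3)⁻¹ ^ (3 * c + 2) := by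
    simp only [hf_def, hg_def, inv_zpow', ← zpow_natCast, ← zpow_mul, ← zpow_add₀ h0]
    congr 2 <;> push_cast <;> ring
  have hquintuple := hasSum_quintupleProduct (pow_ne_zero 5 h0) (norm_pow_lt_one h1 (by lia))
    (inv_ne_zero (pow_ne_zero 3 h0))
  have hthree : thetaProd (u ^ 5) (-(u ^ 5 * (u ^ 3)⁻¹)) * qPochInf ((u ^ 5) ^ 2) ((u ^ 5) ^ 2) =
      Jam u 3 10 := by
    rw [← pow_sub₀ u h0 (by lia)]
    exact (Jam_eq_thetaProd_mul h0 (A := 5) (B := 2) (by lia)).symm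
  have hfour : thetaProd ((u ^ 5) ^ 2) (-(u ^ 3)⁻¹ ^ 2) * J u 20 = Jam u 4 20 := by
    rw [← thetaProd_inv, inv_neg, inv_pow, inv_inv, ← pow_mul, ← pow_mul, J, pow_mul u 10 2]
    exact (Jam_eq_thetaProd_mul h0 (A := 10) (B := 6) (by lia)).symm
  rw [eq_div_iff (J_ne_zero h1 (by lia)), hf.tsum_sub hg, ← tsum_comp_neg f, ← hf_neg.tsum_sub hg,
    tsum_congr hterm, hquintuple.tsum_eq, hthree, mul_assoc, hfour]

end QuintupleSpecialization

section TripleProduct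

variable {u : ℂ}

lemma qPochInf_mul_thetaProd_even (h0 : u ≠ 0) (h1 : ‖u‖ < 1) (m : ℕ) :
    qPochInf (-(u * (u⁻¹ / u ^ (2 * m)))) (u ^ 2) * thetaProd u (u / u ^ (2 * m)) =
      4 * qPochInf (-u ^ 2) (u ^ 2) ^ 3 * (qPoch (-u ^ 2) (u ^ 2) m / u ^ (2 * m ^ 2)) := by
  have hone : qPochInf (-1) (u ^ 2) = 2 * qPochInf (-u ^ 2) (u ^ 2) := by
    rw [qPochInf_eq_qPoch_mul (norm_pow_lt_one h1 two_ne_zero) (-1) 1]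
    norm_num [qPoch]
  rw [qPochInf_neg_mul_div_pow h0 h1 (inv_ne_zero h0), thetaProd_div_pow h0 h1 h0, thetaProd,
    mul_inv_cancel₀ h0, div_inv_eq_mul, div_self h0, hone, ← pow_two, inv_pow]
  field_simp
  ring

lemma qPochInf_mul_thetaProd_odd (h0 : u ≠ 0) (h1 : ‖u‖ < 1) (m : ℕ) :
    qPochInf (-(u * (1 / u ^ (2 * (m + 1))))) (u ^ 2) * thetaProd u (1 / u ^ (2 * m)) =
      qPochInf (-u) (u ^ 2) ^ 3 * (qPoch (-u) (u ^ 2) (m + 1) / u ^ (2 * m ^ 2 + 2 * m + 1)) := by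
  rw [qPochInf_neg_mul_div_pow h0 h1 one_ne_zero, thetaProd_div_pow h0 h1 one_ne_zero, thetaProd,
    mul_one, div_one]
  field_simp
  ring

lemma qPochInf_neg_self (h1 : ‖u‖ < 1) : qPochInf (-u) u = J u 2 / J u 1 := by
  rw [eq_div_iff (J_ne_zero h1 one_ne_zero), J, J, pow_one, mul_comm, qPochInf_mul_qPochInf_neg h1]

lemma qPochInf_neg_sq (h1 : ‖u‖ < 1) : qPochInf (-u) (u ^ 2) = J u 2 ^ 2 / (J u 1 * J u 4) := by
  have h1' := norm_pow_lt_one h1 two_ne_zero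
  have hJ1 : J u 1 = qPochInf u (u ^ 2) * J u 2 := by
    simpa [J, prod_range_succ, ← pow_two] using qPochInf_eq_prod_multisection h1 u two_ne_zero
  have hJ2 : J u 2 = qPochInf (u ^ 2) (u ^ 4) * J u 4 := by
    have := qPochInf_eq_prod_multisection h1' (u ^ 2) two_ne_zero
    rwa [prod_range_succ, prod_range_one, pow_zero, mul_one, pow_one, ← pow_add, ← pow_mul] at this
  have hprod : qPochInf u (u ^ 2) * qPochInf (-u) (u ^ 2) = qPochInf (u ^ 2) (u ^ 4) := by
    rw [qPochInf_mul_qPochInf_neg h1', ← pow_mul]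
  rw [eq_div_iff (mul_ne_zero (J_ne_zero h1 one_ne_zero) (J_ne_zero h1 four_ne_zero))]
  linear_combination (qPochInf (-u) (u ^ 2) * J u 4) * hJ1 + J u 2 * J u 4 * hprod - J u 2 * hJ2

end TripleProduct

lemma J_pow (q : ℂ) (a m : ℕ) : J (q ^ a) m = J q (a * m) := by rw [J, J, pow_mul]

lemma Jam_pow (q : ℂ) (a b m : ℕ) : Jam (q ^ a) b m = Jam q (a * b) (a * m) := by
  simp only [Jam, ← Nat.mul_sub, pow_mul]

section FourFoldSum

variable {q : ℂ}

/-- The exponent of `q` in the quadruple series. -/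
def fourFoldExponent (i j k l : ℤ) : ℤ :=
  4 * i ^ 2 + 4 * j ^ 2 + 4 * k ^ 2 + 5 * l ^ 2 - 4 * i * l - 4 * j * l + 4 * k * l - 4 * i +
    4 * j - 4 * k - 2 * l

/-- The summand of the quadruple series `F(q⁻¹, q, q⁻¹, q^{-1/2}; q²)` after `q ↦ q⁴`. -/
noncomputable def fourFoldSummand (q : ℂ) (i j k l : ℕ) : ℂ :=
  q ^ fourFoldExponent i j k l /
    (qPoch (q ^ 8) (q ^ 8) i * qPoch (q ^ 8) (q ^ 8) j * qPoch (q ^ 8) (q ^ 8) k *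
      qPoch (q ^ 8) (q ^ 8) l)

/-- The summand of Euler's expansion of `(-qz; q²)_∞`. -/
noncomputable def eulerTerm (q z : ℂ) (n : ℕ) : ℂ :=
  q ^ n ^ 2 * z ^ n * (qPoch (q ^ 2) (q ^ 2) n)⁻¹

/-- The sum of `fourFoldSummand q i j k l` over `i`, `j` and `k`, in product form. -/
noncomputable def fourFoldFiber (q : ℂ) (l : ℕ) : ℂ :=
  q ^ (5 * l ^ 2 - 2 * l : ℤ) * qFactInv ((q ^ 4) ^ 2) l *
    (qPochInf (-(q ^ 4 * (q ^ 4) ^ (-1 - l : ℤ))) ((q ^ 4) ^ 2) *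
      thetaProd (q ^ 4) ((q ^ 4) ^ (1 - l : ℤ)))

lemma fourFoldSummand_eq (h0 : q ≠ 0) (i j k l : ℕ) :
    fourFoldSummand q i j k l =
      q ^ (5 * l ^ 2 - 2 * l : ℤ) * qFactInv ((q ^ 4) ^ 2) l *
        (eulerTerm (q ^ 4) ((q ^ 4) ^ (-1 - l : ℤ)) i *
          (eulerTerm (q ^ 4) ((q ^ 4) ^ (1 - l : ℤ)) j *
            eulerTerm (q ^ 4) ((q ^ 4) ^ (1 - l : ℤ))⁻¹ k)) := by
  have hsplit : q ^ fourFoldExponent i j k l =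
      q ^ (5 * l ^ 2 - 2 * l : ℤ) * ((q ^ 4) ^ i ^ 2 * ((q ^ 4) ^ (-1 - l : ℤ)) ^ i *
        ((q ^ 4) ^ j ^ 2 * ((q ^ 4) ^ (1 - l : ℤ)) ^ j *
          ((q ^ 4) ^ k ^ 2 * ((q ^ 4) ^ (1 - l : ℤ))⁻¹ ^ k))) := by
    simp only [fourFoldExponent, ← zpow_natCast, ← zpow_neg, ← zpow_mul, ← zpow_add₀ h0]
    congr 1
    push_cast
    ring
  rw [fourFoldSummand, hsplit, qFactInv_natCast, ← pow_mul]
  simp only [eulerTerm, ← pow_mul, div_eq_mul_inv, mul_inv]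
  ring

lemma le_fourFoldExponent (i j k l : ℤ) :
    -4 + (i + (j + (k + l))) ≤ fourFoldExponent i j k l := by
  unfold fourFoldExponent
  nlinarith [sq_nonneg (4 * (2 * i - l) - 5), sq_nonneg (4 * (2 * j - l) + 3),
    sq_nonneg (4 * (2 * k + l) - 5), sq_nonneg (8 * l - 3)]

lemma summable_fourFoldSummand (h0 : q ≠ 0) (h1 : ‖q‖ < 1) :
    Summable fun p : ℕ × ℕ × ℕ × ℕ => fourFoldSummand q p.1 p.2.1 p.2.2.1 p.2.2.2 := by
  obtain ⟨M, hM⟩ := exists_norm_qFactInv_le (norm_pow_lt_one h1 (n := 8) (by lia))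
  have hM0 : 0 ≤ M := (norm_nonneg _).trans (hM 0)
  have hq : 0 < ‖q‖ := norm_pos_iff.2 h0
  have hgeom : Summable fun n : ℕ => ‖q ^ n‖ := (summable_geometric_of_norm_lt_one h1).norm
  have hgeom4 := hgeom.mul_norm (hgeom.mul_norm (hgeom.mul_norm hgeom))
  refine .of_norm_bounded (hgeom4.mul_left (‖q‖ ^ (-4 : ℤ) * M ^ 4)) fun ⟨i, j, k, l⟩ => ?_
  calc ‖fourFoldSummand q i j k l‖
      = ‖q‖ ^ fourFoldExponent i j k l * (‖qFactInv (q ^ 8) i‖ * ‖qFactInv (q ^ 8) j‖ *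
          ‖qFactInv (q ^ 8) k‖ * ‖qFactInv (q ^ 8) l‖) := by
        simp only [fourFoldSummand, qFactInv_natCast, norm_mul, norm_inv, norm_zpow,
          div_eq_mul_inv, mul_inv]
    _ ≤ ‖q‖ ^ (-4 + (i + (j + (k + l))) : ℤ) * (M * M * M * M) := by
        refine mul_le_mul (zpow_le_zpow_right_of_le_one₀ hq h1.le (le_fourFoldExponent i j k l))
          ?_ (by positivity) (by positivity)
        gcongr <;> exact hM _
    _ = ‖q‖ ^ (-4 : ℤ) * M ^ 4 * ‖q ^ i * (q ^ j * (q ^ k * q ^ l))‖ := by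
        simp only [zpow_add₀ hq.ne', zpow_natCast, norm_mul, norm_pow]
        ring

lemma tsum_const_mul_prod {a b c : ℕ → ℂ} (ha : Summable a) (hb : Summable b) (hc : Summable c)
    (D : ℂ) :
    ∑' x : ℕ × ℕ × ℕ, D * (a x.1 * (b x.2.1 * c x.2.2)) =
      D * ((∑' n, a n) * ((∑' n, b n) * ∑' n, c n)) := by
  rw [tsum_mul_left, tsum_mul_tsum_of_summable_norm hb.norm hc.norm,
    tsum_mul_tsum_of_summable_norm ha.norm (hb.norm.mul_norm hc.norm)]

lemma tsum_fourFoldSummand_eq_fourFoldFiber (h0 : q ≠ 0) (h1 : ‖q‖ < 1) (l : ℕ) :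
    ∑' x : ℕ × ℕ × ℕ, fourFoldSummand q x.1 x.2.1 x.2.2 l = fourFoldFiber q l := by
  have heuler (z : ℂ) : HasSum (eulerTerm (q ^ 4) z) (qPochInf (-(q ^ 4 * z)) ((q ^ 4) ^ 2)) :=
    hasSum_euler (norm_pow_lt_one h1 four_ne_zero) z
  simp only [fourFoldSummand_eq h0]
  rw [tsum_const_mul_prod (heuler _).summable (heuler _).summable (heuler _).summable,
    (heuler _).tsum_eq, (heuler _).tsum_eq, (heuler _).tsum_eq, ← div_eq_mul_inv (q ^ 4),
    ← thetaProd, fourFoldFiber]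

lemma hasSum_fourFoldFiber (h0 : q ≠ 0) (h1 : ‖q‖ < 1) :
    HasSum (fourFoldFiber q)
      (∑' p : ℕ × ℕ × ℕ × ℕ, fourFoldSummand q p.1 p.2.1 p.2.2.1 p.2.2.2) := by
  let reorder : ℕ × ℕ × ℕ × ℕ ≃ ℕ × ℕ × ℕ × ℕ :=
    { toFun := fun p => (p.2.1, p.2.2.1, p.2.2.2, p.1)
      invFun := fun p => (p.2.2.2, p.1, p.2.1, p.2.2.1)
      left_inv := fun _ => rfl
      right_inv := fun _ => rfl }
  have hF := summable_fourFoldSummand h0 h1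
  refine (reorder.hasSum_iff.2 hF.hasSum).prod_fiberwise fun l => ?_
  rw [← tsum_fourFoldSummand_eq_fourFoldFiber h0 h1]
  exact ((reorder.summable_iff.2 hF).prod_factor l).hasSum

lemma fourFoldFiber_even (h0 : q ≠ 0) (h1 : ‖q‖ < 1) (m : ℕ) :
    fourFoldFiber q (2 * m) =
      4 * qPochInf (-(q ^ 4) ^ 2) ((q ^ 4) ^ 2) ^ 3 * (((q ^ 4) ^ 2) ^ m ^ 2 *
        (((q ^ 4) ^ 2) ^ m.choose 2 * qPoch (-(q ^ 4) ^ 2) ((q ^ 4) ^ 2) m *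
          qFactInv ((q ^ 4) ^ 2) (2 * m))) := by
  have hu0 := pow_ne_zero 4 h0
  have hchoose : 2 * (m.choose 2 : ℤ) = m ^ 2 - m := by
    qify
    rw [Nat.cast_choose_two]
    ring
  have harg : (q ^ 4) ^ (-1 - (2 * m : ℕ) : ℤ) = (q ^ 4)⁻¹ / (q ^ 4) ^ (2 * m) := by
    rw [zpow_sub₀ hu0, zpow_neg_one, zpow_natCast]
  have harg' : (q ^ 4) ^ (1 - (2 * m : ℕ) : ℤ) = q ^ 4 / (q ^ 4) ^ (2 * m) := by
    rw [zpow_sub₀ hu0, zpow_one, zpow_natCast]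
  have hpow : q ^ (5 * (2 * m : ℕ) ^ 2 - 2 * (2 * m : ℕ) : ℤ) =
      (q ^ 4) ^ (2 * m ^ 2) * (((q ^ 4) ^ 2) ^ m ^ 2 * ((q ^ 4) ^ 2) ^ m.choose 2) := by
    simp only [← pow_mul, ← pow_add]
    rw [← zpow_natCast]
    congr 1
    push_cast
    linear_combination -4 * hchoose
  rw [fourFoldFiber, harg, harg', hpow, qPochInf_mul_thetaProd_even hu0
    (norm_pow_lt_one h1 four_ne_zero), Nat.cast_mul, Nat.cast_two]
  field_simp

lemma fourFoldFiber_odd (h0 : q ≠ 0) (h1 : ‖q‖ < 1) (m : ℕ) :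
    fourFoldFiber q (2 * m + 1) =
      q⁻¹ * qPochInf (-q ^ 4) ((q ^ 4) ^ 2) ^ 3 * ((q ^ 4) ^ m ^ 2 *
        qPoch (-q ^ 4) ((q ^ 4) ^ 2) (m + 1) * (((q ^ 4) ^ 2) ^ (m ^ 2 + m) *
          qFactInv ((q ^ 4) ^ 2) (2 * m + 1))) := by
  have hu0 := pow_ne_zero 4 h0
  have harg : (q ^ 4) ^ (-1 - (2 * m + 1 : ℕ) : ℤ) = 1 / (q ^ 4) ^ (2 * (m + 1)) := by
    rw [one_div, ← zpow_natCast (q ^ 4), ← zpow_neg]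
    congr 1
    push_cast
    ring
  have harg' : (q ^ 4) ^ (1 - (2 * m + 1 : ℕ) : ℤ) = 1 / (q ^ 4) ^ (2 * m) := by
    rw [one_div, ← zpow_natCast (q ^ 4), ← zpow_neg]
    congr 1
    push_cast
    ring
  have hpow : q ^ (5 * (2 * m + 1 : ℕ) ^ 2 - 2 * (2 * m + 1 : ℕ) : ℤ) =
      q⁻¹ * (q ^ 4) ^ (2 * m ^ 2 + 2 * m + 1) *
        ((q ^ 4) ^ m ^ 2 * ((q ^ 4) ^ 2) ^ (m ^ 2 + m)) := by
    simp only [← pow_mul]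
    simp only [← zpow_natCast q, ← zpow_neg_one q, ← zpow_add₀ h0]
    congr 1
    push_cast
    ring
  rw [fourFoldFiber, harg, harg', hpow, qPochInf_mul_thetaProd_odd hu0
    (norm_pow_lt_one h1 four_ne_zero), Nat.cast_add_one, Nat.cast_mul, Nat.cast_two]
  field_simp

lemma tsum_fourFoldFiber_even (h0 : q ≠ 0) (h1 : ‖q‖ < 1) :
    ∑' m, fourFoldFiber q (2 * m) = 4 * J q 16 ^ 3 * Jam q 32 80 / J q 8 ^ 4 := by
  have hu0 := pow_ne_zero 2 (pow_ne_zero 4 h0)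
  have hu1 := norm_pow_lt_one (norm_pow_lt_one h1 four_ne_zero) two_ne_zero
  rw [tsum_congr (fourFoldFiber_even h0 h1), tsum_mul_left, tsum_slater46 hu0 hu1,
    qPochInf_neg_self hu1]
  simp only [J_pow, Jam_pow, Nat.reduceMul]
  field_simp

lemma tsum_fourFoldFiber_odd (h0 : q ≠ 0) (h1 : ‖q‖ < 1) :
    ∑' m, fourFoldFiber q (2 * m + 1) =
      q⁻¹ * J q 8 ^ 7 * Jam q 12 40 * Jam q 16 80 / (J q 4 ^ 4 * J q 16 ^ 4 * J q 80) := by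
  have hu0 := pow_ne_zero 4 h0
  have hu1 := norm_pow_lt_one h1 four_ne_zero
  have hJ8 : qPochInf ((q ^ 4) ^ 2) ((q ^ 4) ^ 2) = J q 8 := by rw [← pow_mul, J]
  have hJ8_ne : J q 8 ≠ 0 := J_ne_zero h1 (by lia)
  rw [tsum_congr (fourFoldFiber_odd h0 h1), tsum_mul_left, tsum_slater97 hu0 hu1,
    tsum_zpow_sub_zpow_quintuple hu0 hu1, qPochInf_neg_sq hu1, hJ8]
  simp only [J_pow, Jam_pow, Nat.reduceMul]
  field_simp

end FourFoldSum

theorem stmt_17 (q : ℂ) (h0 : 0 < ‖q‖) (h1 : ‖q‖ < 1) :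
    (∑' p : ℕ × ℕ × ℕ × ℕ,
      (fun (i j k l : ℕ) =>
        q ^ ((4*(i:ℤ)^2 + 4*(j:ℤ)^2 + 4*(k:ℤ)^2 + 5*(l:ℤ)^2 - 4*(i:ℤ)*(l:ℤ) - 4*(j:ℤ)*(l:ℤ) + 4*(k:ℤ)*(l:ℤ) - 4*(i:ℤ) + 4*(j:ℤ) - 4*(k:ℤ) - 2*(l:ℤ)) : ℤ) /
          (qPoch (q ^ 8) (q ^ 8) i * qPoch (q ^ 8) (q ^ 8) j * qPoch (q ^ 8) (q ^ 8) k * qPoch (q ^ 8) (q ^ 8) l))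
        p.1 p.2.1 p.2.2.1 p.2.2.2)
    = 4 * (J q 16)^3 * Jam q 32 80 / (J q 8)^4
      + q ^ ((-1 : ℤ)) * (J q 8)^7 * Jam q 12 40 * Jam q 16 80 /
        ((J q 4)^4 * (J q 16)^4 * J q 80) := by
  have hq : q ≠ 0 := norm_pos_iff.1 h0
  have hfiber := hasSum_fourFoldFiber hq h1
  have heven := hfiber.summable.comp_injective (mul_right_injective₀ (two_ne_zero (α := ℕ)))
  have hodd := hfiber.summable.comp_injective
    ((add_left_injective 1).comp (mul_right_injective₀ (two_ne_zero (α := ℕ))))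
  rw [zpow_neg_one, ← tsum_fourFoldFiber_even hq h1, ← tsum_fourFoldFiber_odd hq h1,
    tsum_even_add_odd heven hodd, hfiber.tsum_eq]
  rfl
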